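/- arXiv:1512.07838 — 2 statements merged into one kernel-verified Lean document; each statement's English description precedes it below -/
import Mathlib

section
/- Let (Ω, Σ, μ) be a finite atomless measure space, X a Köthe F-space on (Ω, Σ, μ), Z the set of all signs in X, Y an F-space with a transfinite basis, T_1 : X → Y a continuous linear narrow operator, and T_2 : X → Y a continuous linear narrow operator such that T_2(Z) is relatively compact in Y. Then T_1 + T_2 is narrow. -/
open MeasureTheory

/-- A measure is atomless if every set of positive measure has a subset of
strictly smaller positive measure. -/
def Atomless {Ω : Type*} [MeasurableSpace Ω] (μ : Measure Ω) : Prop :=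
  ∀ A : Set Ω, MeasurableSet A → 0 < μ A →
    ∃ B : Set Ω, B ⊆ A ∧ MeasurableSet B ∧ 0 < μ B ∧ μ B < μ A

/-- The structure of an F-space (complete invariant-metric linear space) on a real
vector space `Y`, encoded via its F-norm. -/
structure FSpaceNorm (Y : Type*) [AddCommGroup Y] [Module ℝ Y] : Type _ where
  norm : Y → ℝ
  nonneg : ∀ y, 0 ≤ norm y
  eq_zero_iff : ∀ y, norm y = 0 ↔ y = 0
  neg : ∀ y, norm (-y) = norm y
  add_le : ∀ y z, norm (y + z) ≤ norm y + norm z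
  smul_le : ∀ (a : ℝ) (y : Y), |a| ≤ 1 → norm (a • y) ≤ norm y
  smul_cont : ∀ y : Y, ∀ ε > 0, ∃ δ > 0, ∀ a : ℝ, |a| ≤ δ → norm (a • y) ≤ ε
  complete : ∀ u : ℕ → Y,
    (∀ ε > 0, ∃ N : ℕ, ∀ m ≥ N, ∀ n ≥ N, norm (u m - u n) ≤ ε) →
    ∃ y : Y, ∀ ε > 0, ∃ N : ℕ, ∀ n ≥ N, norm (u n - y) ≤ ε

/-- A Köthe F-space on a measure space `(Ω, Σ, μ)`: a solid linear subspace of the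
measurable functions containing the constant `1`, with a complete F-norm. -/
structure KotheFSpace (Ω : Type*) [MeasurableSpace Ω] (μ : Measure Ω) : Type _ where
  Mem : (Ω → ℝ) → Prop
  norm : (Ω → ℝ) → ℝ
  measurable_of_mem : ∀ f, Mem f → Measurable f
  add_mem : ∀ f g, Mem f → Mem g → Mem (f + g)
  smul_mem : ∀ (c : ℝ) f, Mem f → Mem (c • f)
  one_mem : Mem (fun _ => 1)
  solid_mem : ∀ f g, Measurable f → Mem g → (∀ ω, |f ω| ≤ |g ω|) → Mem f
  solid_norm : ∀ f g, Mem f → Mem g → (∀ ω, |f ω| ≤ |g ω|) → norm f ≤ norm g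
  nonneg : ∀ f, 0 ≤ norm f
  add_le : ∀ f g, Mem f → Mem g → norm (f + g) ≤ norm f + norm g
  smul_le : ∀ (c : ℝ) f, |c| ≤ 1 → Mem f → norm (c • f) ≤ norm f
  complete : ∀ u : ℕ → (Ω → ℝ), (∀ n, Mem (u n)) →
    (∀ ε > 0, ∃ N : ℕ, ∀ m ≥ N, ∀ n ≥ N, norm (u m - u n) ≤ ε) →
    ∃ f, Mem f ∧ ∀ ε > 0, ∃ N : ℕ, ∀ n ≥ N, norm (u n - f) ≤ ε

/-- A sign: a measurable `{-1,0,1}`-valued function. -/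
def IsSign {Ω : Type*} [MeasurableSpace Ω] (x : Ω → ℝ) : Prop :=
  Measurable x ∧ ∀ ω, x ω = -1 ∨ x ω = 0 ∨ x ω = 1

/-- A sign on a set `A`: its support is `A`. -/
def IsSignOn {Ω : Type*} [MeasurableSpace Ω] (x : Ω → ℝ) (A : Set Ω) : Prop :=
  IsSign x ∧ Function.support x = A

/-- A mean zero sign on `A`. -/
def IsMeanZeroSignOn {Ω : Type*} [MeasurableSpace Ω] (μ : Measure Ω)
    (x : Ω → ℝ) (A : Set Ω) : Prop :=
  IsSignOn x A ∧ ∫ ω, x ω ∂μ = 0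

/-- A continuous linear operator from a Köthe F-space `X` into an F-space `(Y, FY)`. -/
structure KOperator {Ω : Type*} [MeasurableSpace Ω] {μ : Measure Ω}
    (X : KotheFSpace Ω μ) (Y : Type*) [AddCommGroup Y] [Module ℝ Y]
    (FY : FSpaceNorm Y) : Type _ where
  toFun : (Ω → ℝ) → Y
  map_add : ∀ f g, X.Mem f → X.Mem g → toFun (f + g) = toFun f + toFun g
  map_smul : ∀ (c : ℝ) f, X.Mem f → toFun (c • f) = c • toFun f
  cont : ∀ ε > 0, ∃ δ > 0, ∀ f, X.Mem f → X.norm f ≤ δ → FY.norm (toFun f) ≤ ε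

/-- `T` is narrow: every set of positive measure carries a mean zero sign whose image
has arbitrarily small norm. -/
def KOperator.Narrow {Ω : Type*} [MeasurableSpace Ω] {μ : Measure Ω}
    {X : KotheFSpace Ω μ} {Y : Type*} [AddCommGroup Y] [Module ℝ Y]
    {FY : FSpaceNorm Y} (T : KOperator X Y FY) : Prop :=
  ∀ A : Set Ω, MeasurableSet A → 0 < μ A → ∀ ε > 0,
    ∃ x : Ω → ℝ, IsMeanZeroSignOn μ x A ∧ FY.norm (T.toFun x) < ε

/-- The image `T(Z)` of the set of all signs is relatively compact (equivalently, since
`Y` is complete, totally bounded). -/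
def KOperator.RelCompactSigns {Ω : Type*} [MeasurableSpace Ω] {μ : Measure Ω}
    {X : KotheFSpace Ω μ} {Y : Type*} [AddCommGroup Y] [Module ℝ Y]
    {FY : FSpaceNorm Y} (T : KOperator X Y FY) : Prop :=
  ∀ ε > 0, ∃ (n : ℕ) (c : Fin n → Y), ∀ x : Ω → ℝ, IsSign x →
    ∃ i : Fin n, FY.norm (T.toFun x - c i) ≤ ε

/-- A transfinite basis of an F-space `(Y, F)` over a well-ordered index type `I`:
every `y` has a unique transfinite expansion `y = ∑_{i ∈ I} (coeff i y) • e i` with at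
most countably many nonzero coefficients; `psum y i` is the partial sum
`∑_{j < i} (coeff j y) • e j`, defined by transfinite recursion (taking limits at
limit stages) and converging to `y`. -/
structure TransfiniteBasis {Y : Type*} [AddCommGroup Y] [Module ℝ Y]
    (F : FSpaceNorm Y) (I : Type*) [LinearOrder I] : Type _ where
  wo : IsWellOrder I (· < ·)
  e : I → Y
  coeff : I → Y → ℝ
  coeff_linear : ∀ i, IsLinearMap ℝ (coeff i)
  countable_support : ∀ y : Y, Set.Countable {i | coeff i y ≠ 0}
  psum : Y → I → Y
  psum_min : ∀ (y : Y) (i : I), IsMin i → psum y i = 0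
  psum_succ : ∀ (y : Y) (i j : I), i ⋖ j → psum y j = psum y i + coeff i y • e i
  psum_limit : ∀ (y : Y) (i : I), ¬ IsMin i → (∀ j, ¬ j ⋖ i) →
    ∀ ε > (0 : ℝ), ∃ j < i, ∀ k, j ≤ k → k < i → F.norm (psum y k - psum y i) ≤ ε
  psum_tendsto : ∀ y : Y, ∀ ε > (0 : ℝ), ∃ i : I, ∀ j, i ≤ j →
    F.norm (psum y j - y) ≤ ε
  coeff_unique : ∀ y : Y, (∀ i, coeff i y = 0) → y = 0

namespace FanAux

section chains
variable {V W : Type*}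

abbrev Ch (V : Type*) := List V →₀ ZMod 2

noncomputable def mp (g : V → W) : Ch V →ₗ[ZMod 2] Ch W := Finsupp.lmapDomain _ _ (List.map g)
noncomputable def cn (v : V) : Ch V →ₗ[ZMod 2] Ch V := Finsupp.lmapDomain _ _ (List.cons v)

noncomputable def bd0 : List V → Ch V
  | [] => 0
  | v :: l => Finsupp.single l 1 + cn v (bd0 l)

noncomputable def bd : Ch V →ₗ[ZMod 2] Ch V := Finsupp.linearCombination (ZMod 2) bd0

noncomputable def pr0 (g h : V → V) : List V → Ch V
  | [] => 0
  | v :: l => Finsupp.single (g v :: h v :: l.map h) 1 + cn (g v) (pr0 g h l)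

noncomputable def pr (g h : V → V) : Ch V →ₗ[ZMod 2] Ch V :=
  Finsupp.linearCombination (ZMod 2) (pr0 g h)

lemma mp_single (g : V → W) (l : List V) (a : ZMod 2) :
    mp g (Finsupp.single l a) = Finsupp.single (l.map g) a := by
  simp [mp, Finsupp.lmapDomain_apply, Finsupp.mapDomain_single]

lemma cn_single (v : V) (l : List V) (a : ZMod 2) :
    cn v (Finsupp.single l a) = Finsupp.single (v :: l) a := by
  simp [cn, Finsupp.lmapDomain_apply, Finsupp.mapDomain_single]

lemma bd_single (l : List V) : bd (Finsupp.single l 1) = bd0 l := by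
  simp [bd]

lemma pr_single (g h : V → V) (l : List V) : pr g h (Finsupp.single l 1) = pr0 g h l := by
  simp [pr]

lemma ch_ext {M : Type*} [AddCommGroup M] [Module (ZMod 2) M] (f g : Ch V →ₗ[ZMod 2] M)
    (h : ∀ l, f (Finsupp.single l 1) = g (Finsupp.single l 1)) (c : Ch V) : f c = g c := by
  have : f = g := by
    apply Finsupp.lhom_ext'
    intro l
    apply LinearMap.ext_ring
    simpa using h l
  rw [this]

lemma two_zero {M : Type*} [AddCommGroup M] [Module (ZMod 2) M] (x : M) : x + x = 0 := by
  rw [← two_smul (ZMod 2) x, show (2 : ZMod 2) = 0 from rfl, zero_smul]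

lemma bd_cn (v : V) (c : Ch V) : bd (cn v c) = c + cn v (bd c) := by
  refine ch_ext (bd ∘ₗ cn v) (LinearMap.id + cn v ∘ₗ bd) ?_ c
  intro l
  simp [cn_single, bd_single, bd0]

lemma mp_cn (g : V → W) (v : V) (c : Ch V) : mp g (cn v c) = cn (g v) (mp g c) := by
  refine ch_ext (mp g ∘ₗ cn v) (cn (g v) ∘ₗ mp g) ?_ c
  intro l
  simp [cn_single, mp_single]

lemma pr_cn (g h : V → V) (v : V) (c : Ch V) :
    pr g h (cn v c) = cn (g v) (cn (h v) (mp h c)) + cn (g v) (pr g h c) := by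
  refine ch_ext (pr g h ∘ₗ cn v) (cn (g v) ∘ₗ cn (h v) ∘ₗ mp h + cn (g v) ∘ₗ pr g h) ?_ c
  intro l
  simp [cn_single, mp_single, pr_single, pr0]

lemma bd_mp (g : V → W) (c : Ch V) : bd (mp g c) = mp g (bd c) := by
  refine ch_ext (bd ∘ₗ mp g) (mp g ∘ₗ bd) ?_ c
  intro l
  simp only [LinearMap.comp_apply, mp_single, bd_single]
  induction l with
  | nil => simp [bd0]
  | cons v l ih => simp [bd0, ih, mp_single, mp_cn]

lemma bd_pr (g h : V → V) (c : Ch V) :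
    bd (pr g h c) = pr g h (bd c) + (mp g c + mp h c) := by
  refine ch_ext (bd ∘ₗ pr g h) (pr g h ∘ₗ bd + (mp g + mp h)) ?_ c
  intro l
  simp only [LinearMap.comp_apply, LinearMap.add_apply, mp_single, bd_single, pr_single]
  induction l with
  | nil => simp [bd0, pr0, two_zero]
  | cons v l ih =>
    have e : (Finsupp.single (g v :: h v :: l.map h) 1 : Ch V)
        = cn (g v) (cn (h v) (mp h (Finsupp.single l 1))) := by
      simp [cn_single, mp_single]
    simp only [bd0, pr0, map_add, e, bd_cn, ih, pr_cn, pr_single, bd_mp, bd_single, List.map_cons]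
    simp only [← cn_single, ← mp_single]
    have := two_zero (cn (g v) (mp h (Finsupp.single l (1 : ZMod 2))))
    have h2 := fun x : Ch V => two_zero x
    generalize cn (g v) (mp h (Finsupp.single l (1 : ZMod 2))) = a at *
    generalize cn (g v) (mp g (Finsupp.single l (1 : ZMod 2))) = b at *
    generalize cn (h v) (mp h (Finsupp.single l (1 : ZMod 2))) = d at *
    generalize pr0 g h l = p at *
    generalize cn (g v) ((pr g h) (bd0 l)) = q at *
    generalize cn (g v) (cn (h v) (mp h (bd0 l))) = r at *
    have e1 : d + (a + r) + (p + (q + (b + a))) = p + (r + q) + (b + d) + (a + a) := by abel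
    rw [e1, h2 a, add_zero]

end chains

section cube
variable {n : ℕ}
abbrev Cu (n : ℕ) := Fin n → Bool

def ps (t : ℕ) (v : Cu n) : Cu n := fun i => if (i : ℕ) < t then true else v i
def ng (v : Cu n) : Cu n := fun i => !(v i)

noncomputable def hh (n : ℕ) : Ch (Cu n) →ₗ[ZMod 2] Ch (Cu n) :=
  ∑ t ∈ Finset.range n, pr (ps t) (ps (t + 1))

lemma bd_hh (c : Ch (Cu n)) :
    bd (hh n c) = hh n (bd c) + (c + mp (fun _ => fun _ => true) c) := by
  have key : ∀ m, bd ((∑ t ∈ Finset.range m, pr (ps t) (ps (t + 1))) c) =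
      (∑ t ∈ Finset.range m, pr (ps t) (ps (t + 1))) (bd c) + (c + mp (ps m) c) := by
    intro m
    induction m with
    | zero =>
      have : mp (ps 0) c = c := by
        have : (ps 0 : Cu n → Cu n) = id := by ext v i; simp [ps]
        rw [this]
        simp [mp]
      simp [this, two_zero]
    | succ m ih =>
      rw [Finset.sum_range_succ, LinearMap.add_apply, map_add, ih, bd_pr, LinearMap.add_apply]
      have e := two_zero (mp (ps m) c)
      generalize mp (ps m) c = a at *
      generalize mp (ps (m+1)) c = b at *
      generalize (∑ t ∈ Finset.range m, pr (ps t) (ps (t + 1))) (bd c) = d at *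
      generalize pr (ps m) (ps (m + 1)) (bd c) = f at *
      have : d + (c + a) + (f + (a + b)) = d + f + (c + b) + (a + a) := by abel
      rw [this, e, add_zero]
  have := key n
  have e : (ps n : Cu n → Cu n) = (fun _ => fun _ => true) := by ext v i; simp [ps]
  rw [e] at this
  exact this

noncomputable def cs (n : ℕ) : ℕ → Ch (Cu n)
  | 0 => Finsupp.single [fun _ => true] 1
  | j + 1 => hh n (cs n j + mp ng (cs n j))

lemma mp_mp {U V W : Type*} (f : V → W) (g : U → V) (c : Ch U) :
    mp f (mp g c) = mp (f ∘ g) c := by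
  refine ch_ext (mp f ∘ₗ mp g) (mp (f ∘ g)) ?_ c
  intro l
  simp [mp_single]

lemma mp_id (c : Ch (Cu n)) : mp ng (mp ng c) = c := by
  rw [mp_mp]
  have : (ng ∘ ng : Cu n → Cu n) = id := by ext v i; simp [ng]
  rw [this]; simp [mp]

lemma bd_cs_aux (j : ℕ) (h : bd (cs n j + mp ng (cs n j)) = 0) :
    bd (cs n (j + 1)) = cs n j + mp ng (cs n j) := by
  rw [cs, bd_hh, h, map_zero, zero_add, map_add (mp _), mp_mp]
  have : ((fun _ => fun _ => true) ∘ ng : Cu n → Cu n) = (fun _ => fun _ => true) := rfl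
  rw [this, two_zero, add_zero]

lemma bd_cs0 (j : ℕ) : bd (cs n j + mp ng (cs n j)) = 0 := by
  induction j with
  | zero => simp [cs, mp_single, bd_single, bd0, two_zero]
  | succ j ih =>
    rw [map_add, bd_mp, bd_cs_aux j ih, map_add, mp_id, add_comm (mp ng (cs n j)), two_zero]

lemma bd_cs (j : ℕ) : bd (cs n (j + 1)) = cs n j + mp ng (cs n j) := bd_cs_aux j (bd_cs0 j)

def good (n j : ℕ) : Set (List (Cu n)) :=
  {l | l.length = j + 1 ∧ ∃ s : Finset (Fin n), s.card ≤ j ∧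
    ∀ u ∈ l, ∀ v ∈ l, ∀ i ∉ s, u i = v i}

lemma supp_lin {U V : Type*} (S : Set (List U)) (S' : Set (List V)) (f : Ch U →ₗ[ZMod 2] Ch V)
    (hf : ∀ l ∈ S, f (Finsupp.single l 1) ∈ Finsupp.supported (ZMod 2) (ZMod 2) S') (c : Ch U)
    (hc : c ∈ Finsupp.supported (ZMod 2) (ZMod 2) S) :
    f c ∈ Finsupp.supported (ZMod 2) (ZMod 2) S' := by
  rw [Finsupp.supported_eq_span_single] at hc
  induction hc using Submodule.span_induction with
  | mem x hx => obtain ⟨l, hl, rfl⟩ := hx; exact hf l hl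
  | zero => simp
  | add x y _ _ hx hy => rw [map_add]; exact Submodule.add_mem _ hx hy
  | smul a x _ hx => rw [map_smul]; exact Submodule.smul_mem _ _ hx

lemma pr0_supp {V : Type*} (g h : V → V) (l : List V) :
    pr0 g h l ∈ Finsupp.supported (ZMod 2) (ZMod 2)
      {l' | l'.length = l.length + 1 ∧ ∀ w ∈ l', ∃ v ∈ l, w = g v ∨ w = h v} := by
  induction l with
  | nil => simp [pr0]
  | cons v l ih =>
    rw [pr0]
    refine Submodule.add_mem _ ?_ ?_
    · apply Finsupp.single_mem_supported
      simp only [Set.mem_ofPred_eq, List.length_cons, List.length_map, true_and]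
      intro w hw
      simp only [List.mem_cons, List.mem_map] at hw
      rcases hw with rfl | rfl | ⟨a, ha, rfl⟩
      · exact ⟨v, by simp, Or.inl rfl⟩
      · exact ⟨v, by simp, Or.inr rfl⟩
      · exact ⟨a, by simp [ha], Or.inr rfl⟩
    · refine supp_lin _ _ (cn (g v)) ?_ _ ih
      rintro l' ⟨h1, h2⟩
      rw [cn_single]
      apply Finsupp.single_mem_supported
      refine ⟨by simp [h1], ?_⟩
      intro w hw
      rcases List.mem_cons.1 hw with rfl | hw
      · exact ⟨v, by simp, Or.inl rfl⟩
      · obtain ⟨a, ha, h⟩ := h2 w hw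
        exact ⟨a, by simp [ha], h⟩

lemma cs_supp (j : ℕ) : cs n j ∈ Finsupp.supported (ZMod 2) (ZMod 2) (good n j) := by
  induction j with
  | zero =>
    apply Finsupp.single_mem_supported
    exact ⟨rfl, ∅, by simp, by simp⟩
  | succ j ih =>
    rw [cs]
    have hz : cs n j + mp ng (cs n j) ∈ Finsupp.supported (ZMod 2) (ZMod 2) (good n j) := by
      refine Submodule.add_mem _ ih (supp_lin _ _ (mp ng) ?_ _ ih)
      rintro l ⟨h1, s, hs, h2⟩
      rw [mp_single]
      apply Finsupp.single_mem_supported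
      refine ⟨by simp [h1], s, hs, ?_⟩
      intro u hu v hv i hi
      obtain ⟨u', hu', rfl⟩ := List.mem_map.1 hu
      obtain ⟨v', hv', rfl⟩ := List.mem_map.1 hv
      simp [ng, h2 u' hu' v' hv' i hi]
    refine supp_lin _ _ (hh n) ?_ _ hz
    rintro l ⟨h1, s, hs, h2⟩
    rw [hh, LinearMap.sum_apply]
    refine Submodule.sum_mem _ ?_
    intro t ht
    rw [pr_single]
    refine Finsupp.supported_mono ?_ (pr0_supp _ _ l)
    rintro l' ⟨h3, h4⟩
    refine ⟨by omega, insert ⟨t, by simpa using ht⟩ s, ?_, ?_⟩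
    · exact (Finset.card_insert_le _ _).trans (by omega)
    · intro u hu v hv i hi
      simp only [Finset.mem_insert, not_or] at hi
      have hit : (i : ℕ) ≠ t := fun h => hi.1 (Fin.ext h)
      obtain ⟨a, ha, ha'⟩ := h4 u hu
      obtain ⟨b, hb, hb'⟩ := h4 v hv
      have hab := h2 a ha b hb i hi.2
      have e : ∀ w : Cu n, ps (t+1) w i = ps t w i := by
        intro w
        simp only [ps]
        by_cases h : (i:ℕ) < t
        · simp [h, Nat.lt_succ_of_lt h]
        · have : ¬ (i:ℕ) < t + 1 := by omega
          simp [h, this]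
      have e2 : ps t a i = ps t b i := by simp [ps, hab]
      rcases ha' with rfl | rfl <;> rcases hb' with rfl | rfl <;> simp [e, e2]

end cube

section alt

/-- alternating parity lists, as elements of ZMod 2 -/
def al : ℕ → List ℕ → ZMod 2
  | _, [] => 1
  | s, a :: l => if a % 2 = s then al (1 - s) l else 0

def dl (F : List ℕ → ZMod 2) : List ℕ → ZMod 2
  | [] => 0
  | a :: l => F l + dl (fun l' => F (a :: l')) l

lemma dl_zero (l : List ℕ) : dl (fun _ => 0) l = 0 := by
  induction l with
  | nil => rfl
  | cons a l ih => simp [dl, ih]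

lemma dl_al (s : ℕ) (hs : s < 2) (l : List ℕ) (hl : l ≠ []) :
    dl (al s) l = al s l + al (1 - s) l := by
  induction l generalizing s with
  | nil => exact absurd rfl hl
  | cons a l ih =>
    simp only [dl, al]
    by_cases h : a % 2 = s
    · have h' : ¬ (a % 2 = 1 - s) := by omega
      have hss : 1 - (1 - s) = s := by omega
      rw [if_pos h, if_neg h']
      have : (fun l' => if a % 2 = s then al (1 - s) l' else 0) = al (1 - s) := by
        funext l'; rw [if_pos h]
      rw [this]
      by_cases hn : l = []
      · subst hn; simp [dl, al]
      · rw [ih _ (by omega) hn, hss]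
        have := two_zero (M := ZMod 2) (al s l)
        rw [add_comm (al (1 - s) l), ← add_assoc, this, zero_add, add_zero]
    · have h' : (a % 2 = 1 - s) := by omega
      have hss : 1 - (1 - s) = s := by omega
      rw [if_neg h, if_pos h', hss]
      have : (fun l' => if a % 2 = s then al (1 - s) l' else 0) = fun _ => 0 := by
        funext l'; rw [if_neg h]
      rw [this, dl_zero, zero_add, add_zero]

lemma dl_perm (F : List ℕ → ZMod 2) (hF : ∀ l l', l.Perm l' → F l = F l') (l l' : List ℕ)
    (h : l.Perm l') : dl F l = dl F l' := by
  induction h generalizing F with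
  | nil => rfl
  | cons a h ih =>
    simp only [dl]
    rw [hF _ _ h, ih]
    intro l l' h
    exact hF _ _ (h.cons a)
  | swap a b l =>
    simp only [dl]
    have : (fun l' => F (b :: a :: l')) = (fun l' => F (a :: b :: l')) := by
      funext l'; exact hF _ _ (List.Perm.swap _ _ _)
    rw [this]
    ring
  | trans _ _ ih1 ih2 => exact (ih1 F hF).trans (ih2 F hF)

def srt (l : List ℕ) : List ℕ := l.insertionSort (· ≤ ·)

lemma srt_perm (l : List ℕ) : (srt l).Perm l := List.perm_insertionSort _ _
lemma srt_sorted (l : List ℕ) : (srt l).Pairwise (· ≤ ·) := List.pairwise_insertionSort _ _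
lemma srt_eq {l l' : List ℕ} (h : l.Perm l') (h' : l'.Pairwise (· ≤ ·)) : srt l = l' :=
  List.Perm.eq_of_pairwise (fun _ _ _ _ h1 h2 => le_antisymm h1 h2) (srt_sorted l) h' ((srt_perm l).trans h)

def fs (s : ℕ) (l : List ℕ) : ZMod 2 := al s (srt l)

lemma fs_perm (s : ℕ) (l l' : List ℕ) (h : l.Perm l') : fs s l = fs s l' := by
  unfold fs
  rw [srt_eq (h.trans (srt_perm l').symm) (srt_sorted l')]

lemma dl_sorted_congr (F G : List ℕ → ZMod 2) (l : List ℕ)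
    (h : ∀ l', l'.Sublist l → F l' = G l') : dl F l = dl G l := by
  induction l generalizing F G with
  | nil => rfl
  | cons a l ih =>
    simp only [dl]
    rw [h l (List.sublist_cons_self a l), ih]
    intro l' hl'
    exact h _ (hl'.cons_cons a)

lemma dl_fs (s : ℕ) (hs : s < 2) (l : List ℕ) (hl : l ≠ []) :
    dl (fs s) l = fs s l + fs (1 - s) l := by
  rw [dl_perm (fs s) (fs_perm s) l (srt l) (srt_perm l).symm]
  rw [dl_sorted_congr (fs s) (al s)]
  · rw [dl_al s hs]
    · rfl
    · intro h
      have := (srt_perm l).length_eq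
      rw [h] at this
      exact hl (List.length_eq_zero_iff.1 this.symm)
  · intro l' hl'
    unfold fs
    rw [srt_eq (List.Perm.refl l') ((srt_sorted l).sublist hl')]

def fl (c : ℕ) : ℕ := if c % 2 = 0 then c + 1 else c - 1

def nc (l : List ℕ) : Prop := ∀ a ∈ l, ∀ b ∈ l, a / 2 = b / 2 → a = b

lemma al_fl (s : ℕ) (hs : s < 2) (l : List ℕ) : al s (l.map fl) = al (1 - s) l := by
  induction l generalizing s with
  | nil => rfl
  | cons a l ih =>
    simp only [List.map_cons, al]
    have : (fl a % 2 = s) ↔ (a % 2 = 1 - s) := by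
      unfold fl; split_ifs <;> omega
    simp only [this, ih (1 - s) (by omega)]

lemma fs_fl (s : ℕ) (hs : s < 2) (l : List ℕ) (h : nc l) : fs s (l.map fl) = fs (1 - s) l := by
  unfold fs
  rw [srt_eq (l' := (srt l).map fl) ((srt_perm l).symm.map fl), al_fl s hs]
  rw [List.pairwise_map]
  refine (srt_sorted l).imp_of_mem ?_
  intro a b ha hb hab
  have := h a ((srt_perm l).mem_iff.1 ha) b ((srt_perm l).mem_iff.1 hb)
  unfold fl
  split_ifs <;> omega

lemma al_len (s m k : ℕ) (l : List ℕ) (hs : l.Pairwise (· ≤ ·)) (h : nc l)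
    (hk : ∀ a ∈ l, a < 2 * k ∧ m ≤ a / 2 ) (hmk : m ≤ k)  (hal : al s l ≠ 0) : l.length + m ≤ k := by
  induction l generalizing s m with
  | nil => simpa using hmk
  | cons a l ih =>
    simp only [al] at hal
    by_cases hp : a % 2 = s
    swap
    · rw [if_neg hp] at hal; exact absurd rfl hal
    rw [if_pos hp] at hal
    have ha := hk a (by simp)
    have hs' := List.pairwise_cons.1 hs
    have : l.length + (a / 2 + 1) ≤ k := by
      refine ih (1 - s) (a / 2 + 1) hs'.2 (fun x hx y hy => h x (by simp [hx]) y (by simp [hy]))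
        ?_ (by omega) hal
      intro b hb
      refine ⟨(hk b (by simp [hb])).1, ?_⟩
      -- b ≥ head c of l, c has other parity
      obtain ⟨c, l', rfl⟩ : ∃ c l', l = c :: l' := by
        cases l with
        | nil => simp at hb
        | cons c l' => exact ⟨c, l', rfl⟩
      have hc : c % 2 = 1 - s := by
        by_contra hc
        simp [al, hc] at hal
      have h1 := hs'.1 c (by simp)
      have h2 := h a (by simp) c (by simp)
      have h3 : c ≤ b := by
        rcases List.mem_cons.1 hb with rfl | hb
        · exact le_rfl
        · exact (List.pairwise_cons.1 hs'.2).1 b hb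
      have : a / 2 ≠ c / 2 := by
        intro e
        have := h2 e
        omega
      omega
    simp only [List.length_cons]
    omega

end alt

theorem fan (n k : ℕ) (lam : (Fin n → Bool) → ℕ) (hk : ∀ v, lam v < 2 * k)
    (hodd : ∀ v, lam (fun i => !(v i)) = fl (lam v)) :
    ∃ u v : Fin n → Bool, (∃ s : Finset (Fin n), s.card ≤ k ∧ ∀ i ∉ s, u i = v i) ∧
      lam u / 2 = lam v / 2 ∧ lam u ≠ lam v := by
  by_contra hcon
  push Not at hcon
  have hnc : ∀ j ≤ k, ∀ l ∈ good n j, nc (l.map lam) := by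
    rintro j hj l ⟨_, s, hs, h⟩ a ha b hb hab
    obtain ⟨u, hu, rfl⟩ := List.mem_map.1 ha
    obtain ⟨v, hv, rfl⟩ := List.mem_map.1 hb
    exact hcon u v ⟨s, by omega, h u hu v hv⟩ hab
  let Φ : ℕ → Ch (Cu n) →ₗ[ZMod 2] ZMod 2 := fun s =>
    Finsupp.linearCombination (ZMod 2) (fun l => fs s (l.map lam))
  have Φs : ∀ s l, Φ s (Finsupp.single l 1) = fs s (l.map lam) := by
    intro s l; simp [Φ]
  have lin : ∀ (S : Set (List (Cu n))) (f g : Ch (Cu n) →ₗ[ZMod 2] ZMod 2),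
      (∀ l ∈ S, f (Finsupp.single l 1) = g (Finsupp.single l 1)) →
      ∀ c ∈ Finsupp.supported (ZMod 2) (ZMod 2) S, f c = g c := by
    intro S f g h c hc
    rw [Finsupp.supported_eq_span_single] at hc
    induction hc using Submodule.span_induction with
    | mem x hx => obtain ⟨l, hl, rfl⟩ := hx; exact h l hl
    | zero => simp
    | add x y _ _ hx hy => rw [map_add, map_add, hx, hy]
    | smul a x _ hx => rw [map_smul, map_smul, hx]
  have hA : ∀ j ≤ k, Φ 0 (mp ng (cs n j)) = Φ 1 (cs n j) := by
    intro j hj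
    refine lin (good n j) (Φ 0 ∘ₗ mp ng) (Φ 1) ?_ _ (cs_supp j)
    intro l hl
    simp only [LinearMap.comp_apply, mp_single, Φs]
    have : (l.map ng).map lam = (l.map lam).map fl := by
      simp only [List.map_map]
      congr 1
      funext v
      exact hodd v
    rw [this, fs_fl 0 (by omega) _ (hnc j hj l hl)]
  have hbd : ∀ (F : List ℕ → ZMod 2) (l : List (Cu n)),
      Finsupp.linearCombination (ZMod 2) (fun l => F (l.map lam)) (bd0 l) = dl F (l.map lam) := by
    intro F l
    induction l generalizing F with
    | nil => simp [bd0, dl]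
    | cons v l ih =>
      simp only [bd0, map_add, List.map_cons, dl]
      rw [← ih (fun l' => F (lam v :: l'))]
      congr 1
      · simp
      · refine ch_ext (Finsupp.linearCombination (ZMod 2) (fun l => F (l.map lam)) ∘ₗ cn v)
          (Finsupp.linearCombination (ZMod 2) (fun l => F (lam v :: l.map lam))) ?_ _
        intro l
        simp [cn_single]
  have hB : ∀ j, Φ 0 (bd (cs n (j + 1))) = Φ 0 (cs n (j+1)) + Φ 1 (cs n (j+1)) := by
    intro j
    refine lin (good n (j+1)) (Φ 0 ∘ₗ bd) (Φ 0 + Φ 1) ?_ _ (cs_supp (j+1))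
    intro l hl
    simp only [LinearMap.comp_apply, LinearMap.add_apply, Φs, bd_single]
    have := hbd (fs 0) l
    rw [dl_fs 0 (by omega)] at this
    · exact this
    · intro h
      have h1 := hl.1
      rw [List.map_eq_nil_iff] at h
      simp [h] at h1
  have hq : ∀ j ≤ k, Φ 0 (cs n j) + Φ 1 (cs n j) = 1 := by
    intro j
    induction j with
    | zero =>
      intro _
      simp only [cs, Φs]
      have e : ∀ s a, fs s [a] = if a % 2 = s then 1 else 0 := by
        intro s a; simp [fs, srt, al]
      simp only [List.map_cons, List.map_nil, e]
      rcases Nat.mod_two_eq_zero_or_one (lam fun _ => true) with h | h <;> simp [h]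
    | succ j ih =>
      intro hj
      rw [← hB, bd_cs, map_add, hA j (by omega)]
      exact ih (by omega)
  have hz : ∀ s, Φ s (cs n k) = 0 := by
    intro s
    refine lin (good n k) (Φ s) 0 ?_ _ (cs_supp k)
    intro l hl
    rw [Φs, LinearMap.zero_apply]
    by_contra h
    have hp := srt_perm (l.map lam)
    have := al_len s 0 k (srt (l.map lam)) (srt_sorted _) ?_ ?_ (by omega) h
    · rw [hp.length_eq, List.length_map, hl.1] at this
      omega
    · intro a ha b hb
      exact hnc k le_rfl l hl a (hp.mem_iff.1 ha) b (hp.mem_iff.1 hb)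
    · intro a ha
      obtain ⟨v, _, rfl⟩ := List.mem_map.1 (hp.mem_iff.1 ha)
      exact ⟨hk v, by omega⟩
  have := hq k le_rfl
  rw [hz, hz] at this
  simp at this

end FanAux


namespace NarAux

lemma exists_seq {Ω : Type*} (Q G : Set Ω → Prop) (R0 : Set Ω) (h0 : Q R0)
    (h : ∀ R, Q R → ∃ C, C ⊆ R ∧ G C ∧ Q (R \ C)) :
    ∃ f : ℕ → Set Ω, Pairwise (Function.onFun Disjoint f) ∧ ∀ n, f n ⊆ R0 ∧ G (f n) := by
  choose C hC1 hC2 hC3 using h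
  let R : ℕ → {R // Q R} := fun n => Nat.rec ⟨R0, h0⟩ (fun _ R => ⟨R.1 \ C R.1 R.2, hC3 R.1 R.2⟩) n
  have hR : ∀ n, (R (n+1)).1 = (R n).1 \ C (R n).1 (R n).2 := fun n => rfl
  have hanti : Antitone (fun n => (R n).1) := by
    apply antitone_nat_of_succ_le
    intro n
    rw [hR]
    exact Set.sdiff_subset
  refine ⟨fun n => C (R n).1 (R n).2, ?_, fun n => ⟨(hC1 _ _).trans (hanti (Nat.zero_le n)), hC2 _ _⟩⟩
  have key : ∀ i j, i < j → Disjoint (C (R i).1 (R i).2) (C (R j).1 (R j).2) := by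
    intro i j hij
    have h1 : C (R j).1 (R j).2 ⊆ (R (i+1)).1 := (hC1 _ _).trans (hanti hij)
    rw [hR] at h1
    rw [Set.disjoint_left]
    intro x hx hx'
    exact (h1 hx').2 hx
  intro i j hij
  rcases lt_or_gt_of_ne hij with h | h
  · exact key i j h
  · exact (key j i h).symm

section norm
variable {Y : Type*} [AddCommGroup Y] [Module ℝ Y] (F : FSpaceNorm Y)

lemma nzero : F.norm 0 = 0 := (F.eq_zero_iff 0).2 rfl

lemma nsub (a b : Y) : F.norm (a - b) ≤ F.norm a + F.norm b := by
  rw [sub_eq_add_neg, ← F.neg b]; exact F.add_le _ _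

lemma nsum {ι : Type*} (s : Finset ι) (f : ι → Y) :
    F.norm (∑ i ∈ s, f i) ≤ ∑ i ∈ s, F.norm (f i) := by
  classical
  induction s using Finset.induction_on with
  | empty => simp [nzero]
  | insert a s ha ih =>
    rw [Finset.sum_insert ha, Finset.sum_insert ha]
    exact (F.add_le _ _).trans (by linarith)

lemma nhalf (a : Y) : F.norm a ≤ F.norm (a + a) := by
  have := F.smul_le (1/2) (a + a) (by rw [abs_of_pos] <;> norm_num)
  have h2 : (1/2 : ℝ) • (a + a) = a := by
    rw [← two_smul ℝ a, smul_smul, show (1/2 * 2 : ℝ) = 1 by norm_num, one_smul]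
  rwa [h2] at this

end norm

variable {Ω : Type*} [MeasurableSpace Ω]

lemma sign_sum {ι : Type*} (t : Finset ι) (x : ι → Ω → ℝ) (P : ι → Set Ω)
    (hx : ∀ i ∈ t, IsSign (x i)) (hs : ∀ i ∈ t, Function.support (x i) ⊆ P i)
    (hd : Pairwise (Function.onFun Disjoint P)) :
    IsSign (∑ i ∈ t, x i) ∧ Function.support (∑ i ∈ t, x i) = ⋃ i ∈ t, Function.support (x i) := by
  have key : ∀ ω, ∀ i ∈ t, x i ω ≠ 0 → (∑ i ∈ t, x i) ω = x i ω := by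
    intro ω i hi h
    rw [Finset.sum_apply]
    refine Finset.sum_eq_single i ?_ (fun h' => absurd hi h')
    intro j hj hji
    by_contra hne
    exact Set.disjoint_left.1 (hd hji) (hs j hj hne) (hs i hi h)
  have key0 : ∀ ω, (∀ i ∈ t, x i ω = 0) → (∑ i ∈ t, x i) ω = 0 := by
    intro ω h
    rw [Finset.sum_apply]
    exact Finset.sum_eq_zero h
  refine ⟨⟨?_, ?_⟩, ?_⟩
  · have hm := Finset.measurable_sum t (fun i hi => (hx i hi).1)
    convert hm using 1
    ext ω
    rw [Finset.sum_apply]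
  · intro ω
    by_cases h : ∃ i ∈ t, x i ω ≠ 0
    · obtain ⟨i, hi, h⟩ := h
      rw [key ω i hi h]
      exact (hx i hi).2 ω
    · push Not at h
      exact Or.inr (Or.inl (key0 ω h))
  · ext ω
    simp only [Function.mem_support, Set.mem_iUnion, exists_prop]
    constructor
    · intro h
      by_contra hc
      push Not at hc
      exact h (key0 ω hc)
    · rintro ⟨i, hi, h⟩
      rw [key ω i hi h]
      exact h

lemma sign_indicator {x : Ω → ℝ} (hx : IsSign x) {P : Set Ω} (hP : MeasurableSet P) :
    IsSign (P.indicator x) := by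
  refine ⟨hx.1.indicator hP, fun ω => ?_⟩
  by_cases h : ω ∈ P
  · simpa [h] using hx.2 ω
  · simp [h]

lemma sign_neg {x : Ω → ℝ} (hx : IsSign x) : IsSign ((-1 : ℝ) • x) := by
  refine ⟨hx.1.const_smul _, fun ω => ?_⟩
  rcases hx.2 ω with h | h | h <;> simp [h]

lemma sign_one {P : Set Ω} (hP : MeasurableSet P) : IsSign (P.indicator (fun _ => (1:ℝ))) := by
  refine ⟨measurable_const.indicator hP, fun ω => ?_⟩
  by_cases h : ω ∈ P <;> simp [h]

variable {μ : Measure Ω} {X : KotheFSpace Ω μ} {Y : Type*} [AddCommGroup Y] [Module ℝ Y]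
  {FY : FSpaceNorm Y} (T : KOperator X Y FY)

lemma sign_mem (X : KotheFSpace Ω μ) {x : Ω → ℝ} (hx : IsSign x) : X.Mem x := by
  refine X.solid_mem x _ hx.1 X.one_mem ?_
  intro ω
  rcases hx.2 ω with h | h | h <;> simp [h]

lemma zero_mem (X : KotheFSpace Ω μ) : X.Mem 0 := by
  have := X.smul_mem 0 _ X.one_mem
  rwa [zero_smul] at this

lemma T_zero : T.toFun 0 = 0 := by
  have := T.map_smul 0 _ X.one_mem
  rwa [zero_smul, zero_smul] at this

lemma T_sum {ι : Type*} (t : Finset ι) (x : ι → Ω → ℝ) (hx : ∀ i ∈ t, X.Mem (x i)) :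
    X.Mem (∑ i ∈ t, x i) ∧ T.toFun (∑ i ∈ t, x i) = ∑ i ∈ t, T.toFun (x i) := by
  classical
  induction t using Finset.induction_on with
  | empty => simpa using ⟨zero_mem X, T_zero T⟩
  | insert a s ha ih =>
    have h1 := ih (fun i hi => hx i (Finset.mem_insert_of_mem hi))
    have h2 := hx a (Finset.mem_insert_self _ _)
    rw [Finset.sum_insert ha, Finset.sum_insert ha]
    exact ⟨X.add_mem _ _ h2 h1.1, by rw [T.map_add _ _ h2 h1.1, h1.2]⟩

def Small (δ : ℝ) (A : Set Ω) : Prop :=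
  ∀ x, IsSign x → Function.support x ⊆ A → FY.norm (T.toFun x) ≤ δ

lemma Small.mono {T : KOperator X Y FY} {δ : ℝ} {A B : Set Ω} (h : Small T δ A) (hB : B ⊆ A) :
    Small T δ B := fun x hx hs => h x hx (hs.trans hB)

lemma T_split {x : Ω → ℝ} (hx : IsSign x) {P : Set Ω} (hP : MeasurableSet P) :
    T.toFun x = T.toFun (P.indicator x) + T.toFun (Pᶜ.indicator x) := by
  rw [← T.map_add _ _ (sign_mem X (sign_indicator hx hP)) (sign_mem X (sign_indicator hx hP.compl)),
    Set.indicator_self_add_compl]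

lemma Small.union {T : KOperator X Y FY} {δ δ' : ℝ} {A B : Set Ω} (hA : Small T δ A)
    (hB : Small T δ' B) (hm : MeasurableSet A) : Small T (δ + δ') (A ∪ B) := by
  intro x hx hs
  rw [T_split T hx hm]
  refine (FY.add_le _ _).trans (add_le_add ?_ ?_)
  · exact hA _ (sign_indicator hx hm) Set.support_indicator_subset
  · refine hB _ (sign_indicator hx hm.compl) ?_
    rw [Set.support_indicator]
    rintro ω ⟨h1, h2⟩
    exact (hs h2).resolve_left h1

lemma exhaust (hc : T.RelCompactSigns) (η : ℝ) (hη : 0 < η) (f : ℕ → Set Ω)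
    (hf : Pairwise (Function.onFun Disjoint f)) : ∃ n, Small T η (f n) := by
  by_contra hcon
  push Not at hcon
  unfold Small at hcon
  push Not at hcon
  choose x hx hxs hxn using hcon
  obtain ⟨n, c, hnc⟩ := hc (η / 4) (by linarith)
  have hM : ∀ i, ∀ᶠ M : ℕ in Filter.atTop, FY.norm ((1 / (M:ℝ)) • c i) ≤ η / 4 := by
    intro i
    obtain ⟨d, hd, h⟩ := FY.smul_cont (c i) (η / 4) (by linarith)
    have : Filter.Tendsto (fun M : ℕ => 1 / (M : ℝ)) Filter.atTop (nhds 0) :=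
      tendsto_one_div_atTop_nhds_zero_nat
    filter_upwards [this.eventually_le_const hd] with M hM
    apply h
    rw [abs_of_nonneg (by positivity)]
    exact hM
  obtain ⟨M, hM1, hM⟩ := ((Filter.eventually_ge_atTop 1).and (Filter.eventually_all.2 hM)).exists
  have hMpos : (0:ℝ) < M := by exact_mod_cast hM1
  have hbound : ∀ z, IsSign z → FY.norm ((1 / (M:ℝ)) • T.toFun z) ≤ η / 2 := by
    intro z hz
    obtain ⟨i, hi⟩ := hnc z hz
    have e : (1 / (M:ℝ)) • T.toFun z = (1 / (M:ℝ)) • c i + (1 / (M:ℝ)) • (T.toFun z - c i) := by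
      rw [← smul_add]; congr 1; abel
    rw [e]
    have h1 := FY.smul_le (1 / (M:ℝ)) (T.toFun z - c i) (by
      rw [abs_of_nonneg (by positivity), div_le_one hMpos]; exact_mod_cast hM1)
    have h2 := FY.add_le ((1 / (M:ℝ)) • c i) ((1 / (M:ℝ)) • (T.toFun z - c i))
    have := hM i
    linarith
  obtain ⟨n', c', hnc'⟩ := hc (η / (8 * M)) (by positivity)
  choose col hcol using fun k => hnc' (x k) (hx k)
  obtain ⟨y, hy⟩ := Finite.exists_infinite_fiber col
  rw [Set.infinite_coe_iff] at hy
  obtain ⟨t, ht, htc⟩ := hy.exists_subset_card_eq M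
  obtain ⟨k, hk⟩ : t.Nonempty := by rw [← Finset.card_pos]; omega
  have hsig := (sign_sum t x f (fun i _ => hx i) (fun i _ => hxs i) hf).1
  have hsum := (T_sum T t x (fun i _ => sign_mem X (hx i))).2
  have e : T.toFun (x k) = (1 / (M:ℝ)) • T.toFun (∑ i ∈ t, x i)
      + (1 / (M:ℝ)) • ∑ i ∈ t, (T.toFun (x k) - T.toFun (x i)) := by
    rw [← smul_add, hsum, Finset.sum_sub_distrib, Finset.sum_const, htc]
    rw [add_sub_cancel, ← Nat.cast_smul_eq_nsmul ℝ, smul_smul, one_div_mul_cancel hMpos.ne', one_smul]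
  have hdiff : FY.norm (∑ i ∈ t, (T.toFun (x k) - T.toFun (x i))) ≤ η / 4 := by
    refine (nsum FY _ _).trans ?_
    have : ∀ i ∈ t, FY.norm (T.toFun (x k) - T.toFun (x i)) ≤ 2 * (η / (8 * M)) := by
      intro i hi
      have hi' : col i = y := ht hi
      have hk' : col k = y := ht hk
      have h1 := hcol i
      have h2 := hcol k
      rw [hi'] at h1
      rw [hk'] at h2
      have : T.toFun (x k) - T.toFun (x i) = (T.toFun (x k) - c' y) - (T.toFun (x i) - c' y) := by
        abel
      rw [this]
      have := nsub FY (T.toFun (x k) - c' y) (T.toFun (x i) - c' y)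
      linarith
    refine (Finset.sum_le_card_nsmul _ _ _ this).trans ?_
    rw [htc, nsmul_eq_mul]
    apply le_of_eq
    field_simp
    norm_num
  have h1 := FY.add_le ((1 / (M:ℝ)) • T.toFun (∑ i ∈ t, x i))
    ((1 / (M:ℝ)) • ∑ i ∈ t, (T.toFun (x k) - T.toFun (x i)))
  rw [← e] at h1
  have h2 := hbound _ hsig
  have h3 := FY.smul_le (1 / (M:ℝ)) (∑ i ∈ t, (T.toFun (x k) - T.toFun (x i))) (by
      rw [abs_of_nonneg (by positivity), div_le_one hMpos]; exact_mod_cast hM1)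
  have := hxn k
  linarith

lemma exhaust' (hc : T.RelCompactSigns) (η : ℝ) (hη : 0 < η) (f : ℕ → Set Ω)
    (hf : Pairwise (Function.onFun Disjoint f)) :
    ∃ g : ℕ ↪ ℕ, ∀ n, Small T η (f (g n)) := by
  have hinf : {n | Small T η (f n)}.Infinite := by
    intro hfin
    obtain ⟨b, hb⟩ := hfin.bddAbove
    obtain ⟨n, hn⟩ := exhaust T hc η hη (fun n => f (n + (b + 1)))
      (fun i j hij => hf (by simpa using hij))
    have : n + (b + 1) ≤ b := hb hn
    omega
  exact ⟨(hinf.natEmbedding _).trans (Function.Embedding.subtype _),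
    fun n => (hinf.natEmbedding _ n).2⟩

lemma pos_seq [IsFiniteMeasure μ] (hμ : Atomless μ) (A : Set Ω) (hA : MeasurableSet A)
    (hpos : 0 < μ A) :
    ∃ f : ℕ → Set Ω, Pairwise (Function.onFun Disjoint f) ∧
      ∀ n, f n ⊆ A ∧ (MeasurableSet (f n) ∧ 0 < μ (f n)) := by
  refine exists_seq (fun R => MeasurableSet R ∧ 0 < μ R) (fun R => MeasurableSet R ∧ 0 < μ R) A
    ⟨hA, hpos⟩ ?_
  rintro R ⟨hR, hRp⟩
  obtain ⟨B, hB, hBm, hB0, hBl⟩ := hμ R hR hRp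
  refine ⟨B, hB, ⟨hBm, hB0⟩, hR.diff hBm, ?_⟩
  rw [measure_sdiff hB hBm.nullMeasurableSet (measure_ne_top μ B)]
  exact tsub_pos_of_lt hBl

def Fine (δ : ℝ) (A : Set Ω) : Prop :=
  ∃ S : Set (Set Ω), S.Finite ∧ (∀ P ∈ S, MeasurableSet P ∧ Small T δ P) ∧ A ⊆ ⋃₀ S

lemma Fine.union {T : KOperator X Y FY} {δ : ℝ} {A B C : Set Ω} (hA : Fine T δ A)
    (hB : Fine T δ B) (hC : C ⊆ A ∪ B) : Fine T δ C := by
  obtain ⟨S, h1, h2, h3⟩ := hA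
  obtain ⟨S', h1', h2', h3'⟩ := hB
  refine ⟨S ∪ S', h1.union h1', ?_, ?_⟩
  · rintro P (h | h)
    · exact h2 P h
    · exact h2' P h
  · rw [Set.sUnion_union]
    exact hC.trans (Set.union_subset_union h3 h3')

lemma Small.fine {T : KOperator X Y FY} {δ : ℝ} {A : Set Ω} (hA : MeasurableSet A)
    (h : Small T δ A) : Fine T δ A :=
  ⟨{A}, Set.finite_singleton A, by simpa using ⟨hA, h⟩, by simp⟩

lemma fine_univ [IsFiniteMeasure μ] (hμ : Atomless μ) (hμ0 : 0 < μ Set.univ) (hn : T.Narrow)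
    (hc : T.RelCompactSigns) (δ : ℝ) (hδ : 0 < δ) : Fine T δ Set.univ := by
  by_contra hbad
  -- step a
  have ha : ∃ A0, (MeasurableSet A0 ∧ ¬ Fine T δ A0) ∧
      ∀ B, MeasurableSet B → B ⊆ A0 → Fine T δ B ∨ Fine T δ (A0 \ B) := by
    by_contra hcon
    push Not at hcon
    obtain ⟨f, hf, hf'⟩ := exists_seq (fun R => MeasurableSet R ∧ ¬ Fine T δ R)
      (fun R => MeasurableSet R ∧ ¬ Fine T δ R) Set.univ ⟨MeasurableSet.univ, hbad⟩ (by
        intro R hR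
        obtain ⟨B, hBm, hB, h1, h2⟩ := hcon R hR
        exact ⟨B, hB, ⟨hBm, h1⟩, hR.1.diff hBm, h2⟩)
    obtain ⟨n, hn⟩ := exhaust T hc δ hδ f hf
    exact (hf' n).2.2 (hn.fine (hf' n).2.1)
  obtain ⟨A0, ⟨hA0m, hA0⟩, hA0'⟩ := ha
  obtain ⟨η, hη, hηδ⟩ : ∃ η : ℝ, 0 < η ∧ 6 * η < δ := ⟨δ / 7, by linarith, by linarith⟩
  -- step b
  have hb : ∃ A1, (A1 ⊆ A0 ∧ MeasurableSet A1 ∧ ¬ Fine T δ A1) ∧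
      ∀ C, MeasurableSet C → C ⊆ A1 → Fine T δ C → Small T η C := by
    by_contra hcon
    push Not at hcon
    obtain ⟨f, hf, hf'⟩ := exists_seq (fun R => R ⊆ A0 ∧ MeasurableSet R ∧ ¬ Fine T δ R)
      (fun R => ¬ Small T η R) A0 ⟨subset_rfl, hA0m, hA0⟩ (by
        intro R hR
        obtain ⟨C, hCm, hC, h1, h2⟩ := hcon R hR
        refine ⟨C, hC, h2, Set.sdiff_subset.trans hR.1, hR.2.1.diff hCm, ?_⟩
        intro h3
        exact hR.2.2 (h1.union h3 (by intro z hz; by_cases h : z ∈ C <;> simp [h, hz])))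
    obtain ⟨n, hn⟩ := exhaust T hc η hη f hf
    exact (hf' n).2 hn
  obtain ⟨A1, ⟨hA10, hA1m, hA1⟩, hA1'⟩ := hb
  -- at most one of two disjoint subsets of A1 is not small
  have hdich : ∀ P Q, MeasurableSet P → MeasurableSet Q → P ⊆ A1 → Q ⊆ A1 → Disjoint P Q →
      Small T η P ∨ Small T η Q := by
    intro P Q hP hQ hPA hQA hPQ
    rcases hA0' P hP (hPA.trans hA10) with h | h
    · exact Or.inl (hA1' P hP hPA h)
    · right
      refine hA1' Q hQ hQA (h.union h ?_)
      intro z hz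
      exact Or.inl ⟨hA10 (hQA hz), fun hzP => Set.disjoint_left.1 hPQ hzP hz⟩
  -- any sign on a subset of A1 : T x is close to ± T (indicator)
  have hsplit : ∀ x, IsSign x → Function.support x ⊆ A1 →
      ∃ P Q, MeasurableSet P ∧ MeasurableSet Q ∧ Disjoint P Q ∧ P ∪ Q = Function.support x ∧
        Small T η Q ∧
        FY.norm (T.toFun (P.indicator (fun _ => (1:ℝ)))) ≤ FY.norm (T.toFun x) + η ∧
        FY.norm (T.toFun x) ≤ FY.norm (T.toFun (P.indicator (fun _ => (1:ℝ)))) + η := by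
    intro x hx hxs
    have hP : MeasurableSet {ω | x ω = 1} := hx.1 (measurableSet_singleton 1)
    have hQ : MeasurableSet {ω | x ω = -1} := hx.1 (measurableSet_singleton (-1))
    have hd : Disjoint {ω | x ω = 1} {ω | x ω = -1} := by
      rw [Set.disjoint_left]
      intro ω h1 h2
      have h1 : x ω = 1 := h1
      have h2 : x ω = -1 := h2
      rw [h1] at h2; norm_num at h2
    have hu : {ω | x ω = 1} ∪ {ω | x ω = -1} = Function.support x := by
      ext ω
      change (x ω = 1 ∨ x ω = -1) ↔ x ω ≠ 0
      rcases hx.2 ω with h | h | h <;> simp [h]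
    have hxe : T.toFun x = T.toFun (Set.indicator {ω | x ω = 1} (fun _ => (1:ℝ)))
        - T.toFun (Set.indicator {ω | x ω = -1} (fun _ => (1:ℝ))) := by
      have h1 := sign_mem X (sign_one hP)
      have h2 := sign_mem X (sign_one hQ)
      have h3 := T.map_smul (-1) _ h2
      rw [neg_one_smul ℝ (T.toFun _)] at h3
      rw [sub_eq_add_neg, ← h3, ← T.map_add _ _ h1 (X.smul_mem _ _ h2)]
      congr 1
      funext ω
      rcases hx.2 ω with h | h | h <;> simp [Set.indicator, h] <;> norm_num
    have hsP := sign_one hP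
    have hsQ := sign_one hQ
    generalize {ω | x ω = 1} = P at *
    generalize {ω | x ω = -1} = Q at *
    have hPA : P ⊆ A1 := (Set.subset_union_left.trans hu.subset).trans hxs
    have hQA : Q ⊆ A1 := (Set.subset_union_right.trans hu.subset).trans hxs
    have supp : ∀ R : Set Ω, Function.support (R.indicator (fun _ => (1:ℝ))) ⊆ R := fun R =>
      Set.support_indicator_subset
    rcases hdich P Q hP hQ hPA hQA hd with h | h
    · refine ⟨Q, P, hQ, hP, hd.symm, by rw [Set.union_comm, hu], h, ?_, ?_⟩
      · have := h _ hsP (supp P)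
        have h2 := nsub FY (T.toFun (P.indicator fun _ => (1:ℝ))) (T.toFun x)
        have e : T.toFun (P.indicator fun _ => (1:ℝ)) - T.toFun x =
          T.toFun (Q.indicator fun _ => (1:ℝ)) := by rw [hxe]; abel
        rw [e] at h2
        linarith
      · have := h _ hsP (supp P)
        have h2 := nsub FY (T.toFun (P.indicator fun _ => (1:ℝ)))
          (T.toFun (Q.indicator fun _ => (1:ℝ)))
        rw [← hxe] at h2
        linarith
    · refine ⟨P, Q, hP, hQ, hd, hu, h, ?_, ?_⟩
      · have := h _ hsQ (supp Q)
        have h2 := FY.add_le (T.toFun x) (T.toFun (Q.indicator fun _ => (1:ℝ)))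
        have e : T.toFun x + T.toFun (Q.indicator fun _ => (1:ℝ)) =
          T.toFun (P.indicator fun _ => (1:ℝ)) := by rw [hxe]; abel
        rw [e] at h2
        linarith
      · have := h _ hsQ (supp Q)
        have h2 := nsub FY (T.toFun (P.indicator fun _ => (1:ℝ)))
          (T.toFun (Q.indicator fun _ => (1:ℝ)))
        rw [← hxe] at h2
        linarith
  -- step c
  have hns : ¬ Small T δ A1 := fun h => hA1 (h.fine hA1m)
  unfold Small at hns
  push Not at hns
  obtain ⟨z, hz, hzs, hzn⟩ := hns
  obtain ⟨P, Q, hP, hQ, hPQ, hPQu, hQs, -, hP2⟩ := hsplit z hz hzs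
  have hPA : P ⊆ A1 := (Set.subset_union_left.trans hPQu.subset).trans hzs
  -- small set of positive measure
  obtain ⟨f, hf, hf'⟩ := pos_seq hμ Set.univ MeasurableSet.univ hμ0
  obtain ⟨n, hnB⟩ := exhaust T hc η hη f hf
  obtain ⟨-, hBm, hB0⟩ := hf' n
  generalize f n = B at *
  obtain ⟨x, ⟨⟨hx, hxs⟩, -⟩, hxn⟩ := hn (P ∪ B) (hP.union hBm)
    (hB0.trans_le (measure_mono Set.subset_union_right)) η hη
  have e1 := T_split T hx hP
  have h2 : FY.norm (T.toFun (Pᶜ.indicator x)) ≤ η := by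
    refine hnB _ (sign_indicator hx hP.compl) ?_
    rw [Set.support_indicator, hxs]
    rintro ω ⟨h1, h2⟩
    exact h2.resolve_left h1
  have hsuppP : Function.support (P.indicator x) = P := by
    rw [Set.support_indicator, hxs, Set.inter_eq_left]
    exact Set.subset_union_left
  have h3 : FY.norm (T.toFun (P.indicator x)) ≤ 2 * η := by
    have : T.toFun (P.indicator x) = T.toFun x - T.toFun (Pᶜ.indicator x) := by
      rw [e1]; abel
    rw [this]
    have := nsub FY (T.toFun x) (T.toFun (Pᶜ.indicator x))
    linarith
  obtain ⟨P', Q', hP', hQ', hd', hu', hQs', hP1', -⟩ := hsplit (P.indicator x)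
    (sign_indicator hx hP) (by rw [hsuppP]; exact hPA)
  rw [hsuppP] at hu'
  have e2 : T.toFun (P.indicator (fun _ => (1:ℝ))) = T.toFun (P'.indicator (fun _ => (1:ℝ)))
      + T.toFun (Q'.indicator (fun _ => (1:ℝ))) := by
    rw [← T.map_add _ _ (sign_mem X (sign_one hP')) (sign_mem X (sign_one hQ')), ← hu',
      Set.indicator_union_of_disjoint hd']
    rfl
  have h4 := hQs' _ (sign_one hQ') Set.support_indicator_subset
  have h5 := FY.add_le (T.toFun (P'.indicator (fun _ => (1:ℝ))))
    (T.toFun (Q'.indicator (fun _ => (1:ℝ))))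
  rw [← e2] at h5
  linarith

lemma partition [IsFiniteMeasure μ] (hμ : Atomless μ) (hn : T.Narrow)
    (hc : T.RelCompactSigns) (A : Set Ω) (hA : MeasurableSet A) (hpos : 0 < μ A)
    (δ : ℝ) (hδ : 0 < δ) :
    ∃ (m : ℕ) (P : Fin m → Set Ω), Pairwise (Function.onFun Disjoint P) ∧ (⋃ i, P i) = A ∧
      ∀ i, MeasurableSet (P i) ∧ 0 < μ (P i) ∧ Small T δ (P i) := by
  obtain ⟨S, hS, hS1, hS2⟩ := fine_univ T hμ (hpos.trans_le (measure_mono (Set.subset_univ A)))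
    hn hc (δ / 2) (by linarith)
  obtain ⟨m, e, he⟩ : ∃ (m : ℕ) (e : Fin m → Set Ω), Set.range e = S := by
    obtain ⟨m, e, -, h⟩ := hS.fin_param
    exact ⟨m, e, h⟩
  have he1 : ∀ i, MeasurableSet (e i) ∧ Small T (δ / 2) (e i) := fun i =>
    hS1 _ (he ▸ Set.mem_range_self i)
  have he2 : ∀ ω, ∃ i, ω ∈ e i := by
    intro ω
    obtain ⟨s, hs, h⟩ := hS2 (Set.mem_univ ω)
    rw [← he] at hs
    obtain ⟨i, rfl⟩ := hs
    exact ⟨i, h⟩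
  obtain ⟨f, hf, hf'⟩ := pos_seq hμ A hA hpos
  obtain ⟨g, hg⟩ := exhaust' T hc (δ / 2) (by linarith) f hf
  let B : Fin m → Set Ω := fun i => f (g i)
  have hBd : Pairwise (Function.onFun Disjoint B) := fun i j hij =>
    hf (fun h => hij (Fin.ext (g.injective h)))
  have hB : ∀ i, B i ⊆ A ∧ (MeasurableSet (B i) ∧ 0 < μ (B i)) := fun i => hf' _
  have hBs : ∀ i, Small T (δ / 2) (B i) := fun i => hg _
  let Q : Fin m → Set Ω := fun i => ((A ∩ e i) \ ⋃ j, ⋃ (_ : j < i), e j) \ ⋃ j, B j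
  have hQm : ∀ i, MeasurableSet (Q i) := fun i =>
    ((hA.inter (he1 i).1).diff (MeasurableSet.iUnion fun j => MeasurableSet.iUnion fun _ =>
      (he1 j).1)).diff (MeasurableSet.iUnion fun j => (hB j).2.1)
  refine ⟨m, fun i => Q i ∪ B i, ?_, ?_, ?_⟩
  · have hQQ : ∀ i j, i < j → Disjoint (Q i) (Q j) := by
      intro i j hij
      rw [Set.disjoint_left]
      intro ω h1 h2
      apply h2.1.2
      simp only [Set.mem_iUnion]
      exact ⟨i, hij, h1.1.1.2⟩
    have hQB : ∀ i j, Disjoint (Q i) (B j) := by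
      intro i j
      rw [Set.disjoint_left]
      intro ω h1 h2
      exact h1.2 (Set.mem_iUnion.2 ⟨j, h2⟩)
    intro i j hij
    change Disjoint (Q i ∪ B i) (Q j ∪ B j)
    rw [Set.disjoint_union_left, Set.disjoint_union_right, Set.disjoint_union_right]
    refine ⟨⟨?_, hQB i j⟩, (hQB j i).symm, hBd hij⟩
    rcases lt_or_gt_of_ne hij with h | h
    · exact hQQ i j h
    · exact (hQQ j i h).symm
  · apply Set.Subset.antisymm
    · apply Set.iUnion_subset
      intro i
      exact Set.union_subset (fun ω h => h.1.1.1) (hB i).1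
    · intro ω hω
      by_cases h : ∃ j, ω ∈ B j
      · obtain ⟨j, hj⟩ := h
        exact Set.mem_iUnion.2 ⟨j, Or.inr hj⟩
      · classical
        have hex := he2 ω
        let s : Finset (Fin m) := Finset.univ.filter (fun i => ω ∈ e i)
        have hs : s.Nonempty := by
          obtain ⟨i, hi⟩ := hex
          exact ⟨i, by simp [s, hi]⟩
        have hmin := s.min'_mem hs
        refine Set.mem_iUnion.2 ⟨s.min' hs, Or.inl ⟨⟨⟨hω, by simpa [s] using hmin⟩, ?_⟩, ?_⟩⟩
        · simp only [Set.mem_iUnion, not_exists]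
          intro j hj hje
          exact absurd (s.min'_le j (by simp [s, hje])) (not_le.2 hj)
        · simpa using h
  · intro i
    refine ⟨(hQm i).union (hB i).2.1, (hB i).2.2.trans_le (measure_mono Set.subset_union_right), ?_⟩
    have h1 : Small T (δ / 2) (Q i) := (he1 i).2.mono (fun ω h => h.1.1.2)
    have := h1.union (hBs i) (hQm i)
    rwa [add_halves] at this

/-- The rounding lemma, from the combinatorial Borsuk-Ulam argument. -/
lemma rounding (m k : ℕ) (v : Fin m → Y) (c : Fin k → Y) (ε δ ρ : ℝ) (hρ : 0 ≤ ρ)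
    (hε : 2 * δ + k * (2 * ρ) < ε)
    (hv : ∀ i, FY.norm (v i) ≤ ρ)
    (hc : ∀ θ : Fin m → Bool, ∃ i, FY.norm ((∑ j, (if θ j then (1:ℝ) else -1) • v j) - c i) ≤ δ) :
    ∃ θ : Fin m → Bool, FY.norm (∑ j, (if θ j then (1:ℝ) else -1) • v j) < ε := by
  classical
  by_contra hcon
  push Not at hcon
  let S : (Fin m → Bool) → Y := fun θ => ∑ j, (if θ j then (1:ℝ) else -1) • v j
  have hcon : ∀ θ, ε ≤ FY.norm (S θ) := hcon
  have hc : ∀ θ, ∃ i, FY.norm (S θ - c i) ≤ δ := hc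
  have hSneg : ∀ θ, S (fun i => !(θ i)) = - S θ := by
    intro θ
    simp only [S]
    rw [← Finset.sum_neg_distrib]
    refine Finset.sum_congr rfl fun j _ => ?_
    rcases Bool.eq_false_or_eq_true (θ j) with h | h <;> simp [h]
  let p : (Fin m → Bool) → ℕ → Prop := fun θ i =>
    ∃ h : i < k, FY.norm (S θ - c ⟨i, h⟩) ≤ δ ∨ FY.norm (S θ + c ⟨i, h⟩) ≤ δ
  have hp : ∀ θ, ∃ i, p θ i := by
    intro θ
    obtain ⟨i, hi⟩ := hc θ
    exact ⟨i, i.2, Or.inl hi⟩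
  let q : (Fin m → Bool) → ℕ → Prop := fun θ i => ∃ h : i < k, FY.norm (S θ - c ⟨i, h⟩) ≤ δ
  let r : (Fin m → Bool) → ℕ := fun θ => Nat.find (hp θ)
  let lam : (Fin m → Bool) → ℕ := fun θ => 2 * r θ + if q θ (r θ) then 1 else 0
  have hrk : ∀ θ, r θ < k := fun θ => (Nat.find_spec (hp θ)).1
  have hnp : ∀ θ i, FY.norm (-S θ - c i) = FY.norm (S θ + c i) := by
    intro θ i
    rw [← FY.neg]; congr 1; abel
  have hnp' : ∀ θ i, FY.norm (-S θ + c i) = FY.norm (S θ - c i) := by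
    intro θ i
    rw [← FY.neg]; congr 1; abel
  have hpneg : ∀ θ i, p (fun i => !(θ i)) i ↔ p θ i := by
    intro θ i
    simp only [p, hSneg, hnp, hnp']
    exact exists_congr fun _ => or_comm
  have hrneg : ∀ θ, r (fun i => !(θ i)) = r θ := by
    intro θ
    apply Nat.find_congr'
    intro i
    exact hpneg θ i
  have hk2 : (0:ℝ) ≤ k * (2 * ρ) := by positivity
  -- opposite closeness
  have hopp : ∀ θ θ' (i : Fin k), FY.norm (S θ - c i) ≤ δ → FY.norm (S θ' + c i) ≤ δ →
      ε ≤ FY.norm (S θ - S θ') + 2 * δ := by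
    intro θ θ' i h1 h2
    have h3 := (hcon θ).trans (nhalf FY (S θ))
    have e : S θ + S θ = (S θ - S θ') + ((S θ - c i) + (S θ' + c i)) := by abel
    rw [e] at h3
    have h4 := FY.add_le (S θ - S θ') ((S θ - c i) + (S θ' + c i))
    have h5 := FY.add_le (S θ - c i) (S θ' + c i)
    linarith
  have hex : ∀ θ, q (fun i => !(θ i)) (r θ) ↔ ¬ q θ (r θ) := by
    intro θ
    have hs := Nat.find_spec (hp θ)
    change p θ (r θ) at hs
    obtain ⟨hlt, hs⟩ := hs
    constructor
    · rintro ⟨_, h1⟩ ⟨_, h2⟩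
      rw [hSneg, hnp] at h1
      have := hopp θ θ ⟨r θ, hlt⟩ h2 h1
      rw [sub_self, nzero] at this
      linarith
    · intro h
      refine ⟨hlt, ?_⟩
      rw [hSneg, hnp]
      exact hs.resolve_left (fun h' => h ⟨hlt, h'⟩)
  obtain ⟨u, w, ⟨s, hs, huw⟩, h1, h2⟩ := FanAux.fan m k lam
    (by intro θ; have := hrk θ; simp only [lam]; split_ifs <;> omega)
    (by
      intro θ
      simp only [lam, hrneg, hex, FanAux.fl]
      by_cases h : q θ (r θ) <;> simp [h] )
  have hclose : ∀ u w : Fin m → Bool, (∀ i ∉ s, u i = w i) →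
      FY.norm (S u - S w) ≤ k * (2 * ρ) := by
    intro u w huw
    have e : S u - S w = ∑ j ∈ s, ((if u j then (1:ℝ) else -1) • v j
        - (if w j then (1:ℝ) else -1) • v j) := by
      simp only [S]
      rw [← Finset.sum_sub_distrib]
      symm
      apply Finset.sum_subset (Finset.subset_univ s)
      intro j _ hj
      rw [huw j hj, sub_self]
    rw [e]
    refine (nsum FY _ _).trans ?_
    have hb : ∀ (b : Bool) j, FY.norm ((if b then (1:ℝ) else -1) • v j) ≤ ρ := by
      intro b j
      refine (FY.smul_le _ _ ?_).trans (hv j)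
      cases b <;> simp
    refine (Finset.sum_le_card_nsmul s _ (2 * ρ) ?_).trans ?_
    · intro j _
      have := nsub FY ((if u j then (1:ℝ) else -1) • v j) ((if w j then (1:ℝ) else -1) • v j)
      have h1 := hb (u j) j
      have h2 := hb (w j) j
      linarith
    · rw [nsmul_eq_mul]
      refine mul_le_mul_of_nonneg_right ?_ (by linarith)
      exact_mod_cast hs
  have hru : r u = r w := by
    simp only [lam] at h1
    split_ifs at h1 <;> omega
  have fin : ∀ u w : Fin m → Bool, (∀ i ∉ s, u i = w i) → r u = r w → q u (r u) →
      ¬ q w (r w) → False := by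
    intro u w huw hru hqu hqw
    obtain ⟨hlt, hs⟩ := (Nat.find_spec (hp w) : p w (r w))
    have hs := hs.resolve_left (fun h' => hqw ⟨hlt, h'⟩)
    rw [hru] at hqu
    obtain ⟨_, hqu⟩ := hqu
    have := hopp u w ⟨r w, hlt⟩ hqu hs
    have := hclose u w huw
    linarith
  by_cases hqu : q u (r u)
  · by_cases hqw : q w (r w)
    · exact h2 (by simp only [lam]; rw [if_pos hqu, if_pos hqw, hru])
    · exact fin u w huw hru hqu hqw
  · by_cases hqw : q w (r w)
    · exact fin w u (fun i hi => (huw i hi).symm) hru.symm hqw hqu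
    · exact h2 (by simp only [lam]; rw [if_neg hqu, if_neg hqw, hru])

end NarAux


/-- Theorem 5.2: if `Y` has a transfinite basis, `T₁` is narrow and `T₂` is narrow
with `T₂(Z)` relatively compact, then `T₁ + T₂` is narrow. -/
theorem stmt_8 {Ω : Type*} [MeasurableSpace Ω] (μ : Measure Ω)
    [IsFiniteMeasure μ] (hμ : Atomless μ)
    (X : KotheFSpace Ω μ) (Y : Type*) [AddCommGroup Y] [Module ℝ Y]
    (FY : FSpaceNorm Y)
    (I : Type*) [LinearOrder I] (B : TransfiniteBasis FY I)
    (T₁ T₂ : KOperator X Y FY)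
    (h₁ : T₁.Narrow) (h₂ : T₂.Narrow) (h₂cpt : T₂.RelCompactSigns) :
    ∀ A : Set Ω, MeasurableSet A → 0 < μ A → ∀ ε > (0 : ℝ),
      ∃ x : Ω → ℝ, IsMeanZeroSignOn μ x A ∧
        FY.norm (T₁.toFun x + T₂.toFun x) < ε := by
  intro A hA hpos ε hε
  obtain ⟨k, c, hc⟩ := h₂cpt (ε / 16) (by linarith)
  obtain ⟨ρ, hρ, hkρ⟩ : ∃ ρ : ℝ, 0 < ρ ∧ k * (2 * ρ) < ε / 8 := by
    refine ⟨ε / (32 * (k + 1)), by positivity, ?_⟩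
    have hk : (0:ℝ) ≤ k := Nat.cast_nonneg k
    rw [← mul_assoc, ← mul_div_assoc, div_lt_div_iff₀ (by positivity) (by norm_num)]
    nlinarith
  obtain ⟨m, P, hPd, hPu, hP⟩ := NarAux.partition T₂ hμ h₂ h₂cpt A hA hpos ρ hρ
  have hm : (0:ℝ) ≤ m := Nat.cast_nonneg m
  choose x hx hxn using fun i => h₁ (P i) (hP i).1 (hP i).2.1 (ε / (2 * (m + 1))) (by positivity)
  let sg : Bool → ℝ := fun b => if b then (1:ℝ) else -1
  have hsg : ∀ b, |sg b| ≤ 1 := by intro b; cases b <;> simp [sg]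
  have hsgx : ∀ b i, IsSign (sg b • x i) := by
    intro b i
    cases b
    · simpa [sg] using NarAux.sign_neg (hx i).1.1
    · simpa [sg] using (hx i).1.1
  have hsgs : ∀ b i, Function.support (sg b • x i) = P i := by
    intro b i
    rw [← (hx i).1.2]
    ext ω
    cases b <;> simp [sg]
  have hsign := fun θ : Fin m → Bool => NarAux.sign_sum Finset.univ (fun i => sg (θ i) • x i) P
    (fun i _ => hsgx _ i) (fun i _ => (hsgs _ i).subset) hPd
  have hT : ∀ (T : KOperator X Y FY) (θ : Fin m → Bool),
      T.toFun (∑ i, sg (θ i) • x i) = ∑ i, sg (θ i) • T.toFun (x i) := by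
    intro T θ
    rw [(NarAux.T_sum T Finset.univ _ (fun i _ => NarAux.sign_mem X (hsgx (θ i) i))).2]
    refine Finset.sum_congr rfl fun i _ => ?_
    exact T.map_smul _ _ (NarAux.sign_mem X (hx i).1.1)
  obtain ⟨θ, hθ⟩ := NarAux.rounding (FY := FY) m k (fun i => T₂.toFun (x i)) c (ε / 2) (ε / 16) ρ
    hρ.le (by linarith) (fun i => (hP i).2.2 _ (hx i).1.1 (hx i).1.2.subset) (by
      intro θ
      obtain ⟨i, hi⟩ := hc _ (hsign θ).1
      rw [hT] at hi
      exact ⟨i, hi⟩)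
  refine ⟨∑ i, sg (θ i) • x i, ⟨⟨(hsign θ).1, ?_⟩, ?_⟩, ?_⟩
  · rw [(hsign θ).2, ← hPu]
    simp [hsgs]
  · have hInt : ∀ i, Integrable (x i) μ := by
      intro i
      refine Integrable.of_bound (hx i).1.1.1.aestronglyMeasurable 1 (Filter.Eventually.of_forall ?_)
      intro ω
      rcases (hx i).1.1.2 ω with h | h | h <;> simp [h]
    simp only [Finset.sum_apply, Pi.smul_apply]
    rw [integral_finsetSum (f := fun i ω => sg (θ i) • x i ω) _ (fun i _ => (hInt i).smul (sg (θ i)))]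
    refine Finset.sum_eq_zero fun i _ => ?_
    rw [integral_smul, (hx i).2, smul_zero]
  · rw [hT T₁, hT T₂]
    have h1 : FY.norm (∑ i, sg (θ i) • T₁.toFun (x i)) ≤ ε / 2 := by
      refine (NarAux.nsum FY _ _).trans ?_
      refine (Finset.sum_le_card_nsmul _ _ (ε / (2 * (m + 1))) ?_).trans ?_
      · intro i _
        exact (FY.smul_le _ _ (hsg _)).trans (hxn i).le
      · rw [Finset.card_univ, Fintype.card_fin, nsmul_eq_mul, ← mul_div_assoc,
          div_le_div_iff₀ (by positivity) (by norm_num)]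
        nlinarith
    have h2 := FY.add_le (∑ i, sg (θ i) • T₁.toFun (x i)) (∑ i, sg (θ i) • T₂.toFun (x i))
    have h3 : FY.norm (∑ i, sg (θ i) • T₂.toFun (x i)) < ε / 2 := hθ
    linarith
end

section
/- Let (Ω, Σ, μ) be a finite atomless measure space, X a Köthe F-space on (Ω, Σ, μ), Z the set of all signs in X, Y a locally convex F-space, T_1 : X → Y a continuous linear narrow operator, and T_2 : X → Y a continuous linear narrow operator such that T_2(Z) is relatively compact in Y. Then T_1 + T_2 is narrow. -/
open MeasureTheory

/-- One-sided bounds for a set function on measurable subsets of `A`. -/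
def SetBd {Ω : Type*} [MeasurableSpace Ω] (ν : Set Ω → ℝ) (a b : ℝ) (A : Set Ω) : Prop :=
  ∀ B : Set Ω, B ⊆ A → MeasurableSet B → ν B ≤ a ∧ -ν B ≤ b

/-- Every set of positive measure splits into two pieces of almost equal charge. -/
def SetSplit {Ω : Type*} [MeasurableSpace Ω] (μ : Measure Ω) (ν : Set Ω → ℝ) : Prop :=
  ∀ A : Set Ω, MeasurableSet A → 0 < μ A → ∀ ε > (0 : ℝ), ∃ B C : Set Ω,
    MeasurableSet B ∧ MeasurableSet C ∧ 0 < μ B ∧ 0 < μ C ∧ Disjoint B C ∧ B ∪ C = A ∧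
    |ν B - ν C| < ε

/-- Finite additivity. -/
def SetAdd {Ω : Type*} [MeasurableSpace Ω] (ν : Set Ω → ℝ) : Prop :=
  ∀ B C : Set Ω, MeasurableSet B → MeasurableSet C → Disjoint B C → ν (B ∪ C) = ν B + ν C

section charges
variable {Ω : Type*} [MeasurableSpace Ω] {μ : Measure Ω} {ν : Set Ω → ℝ}

lemma SetAdd.diff (hadd : SetAdd ν) {A B : Set Ω} (hA : MeasurableSet A) (hB : MeasurableSet B)
    (h : B ⊆ A) : ν A = ν B + ν (A \ B) := by
  rw [← hadd B (A \ B) hB (hA.diff hB) Set.disjoint_sdiff_right, Set.union_sdiff_cancel h]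

lemma SetAdd.inter_diff (hadd : SetAdd ν) {B D : Set Ω} (hB : MeasurableSet B)
    (hD : MeasurableSet D) : ν B = ν (B ∩ D) + ν (B \ D) := by
  rw [← hadd (B ∩ D) (B \ D) (hB.inter hD) (hB.diff hD) Set.disjoint_sdiff_inter.symm,
    Set.inter_union_sdiff]

lemma SetAdd.neg (hadd : SetAdd ν) : SetAdd (fun B => -ν B) := by
  intro B C hB hC h
  simp only [hadd B C hB hC h]; ring

lemma SetSplit.neg (hs : SetSplit μ ν) : SetSplit μ (fun B => -ν B) := by
  intro A hA hp ε hε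
  obtain ⟨B, C, h1, h2, h3, h4, h5, h6, h7⟩ := hs A hA hp ε hε
  refine ⟨B, C, h1, h2, h3, h4, h5, h6, ?_⟩
  rw [abs_sub_comm] at h7
  convert h7 using 2; ring

lemma SetBd.neg {a b : ℝ} {A : Set Ω} (h : SetBd ν a b A) : SetBd (fun B => -ν B) b a A := by
  intro B hB hm
  have := h B hB hm
  exact ⟨this.2, by simpa using this.1⟩

lemma SetBd.mono {a b : ℝ} {A B : Set Ω} (h : SetBd ν a b A) (hB : B ⊆ A) : SetBd ν a b B :=
  fun C hC hm => h C (hC.trans hB) hm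

/-- Halving the upper bound by passing to a subset. -/
lemma small_upper (hadd : SetAdd ν) (hs : SetSplit μ ν) (n : ℕ) : ∀ (a : ℝ) (A : Set Ω),
    MeasurableSet A → 0 < μ A → (∀ B ⊆ A, MeasurableSet B → ν B ≤ a) →
    ∃ D ⊆ A, MeasurableSet D ∧ 0 < μ D ∧ ∀ B ⊆ D, MeasurableSet B → ν B ≤ a / 2 ^ n := by
  induction n with
  | zero => intro a A hA hp h; exact ⟨A, le_rfl, hA, hp, by simpa using h⟩
  | succ n ih =>
    intro a A hA hp h
    obtain ⟨B, C, hB, hC, hBp, hCp, hd, hu, -⟩ := hs A hA hp 1 one_pos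
    have key : (∀ E ⊆ B, MeasurableSet E → ν E ≤ a / 2) ∨
        (∀ E ⊆ C, MeasurableSet E → ν E ≤ a / 2) := by
      by_contra hcon
      push Not at hcon
      obtain ⟨⟨E, hE, hEm, hE2⟩, F, hF, hFm, hF2⟩ := hcon
      have h1 := h (E ∪ F) (by rw [← hu]; exact Set.union_subset_union hE hF) (hEm.union hFm)
      rw [hadd E F hEm hFm (hd.mono hE hF)] at h1
      linarith
    have e : a / 2 / 2 ^ n = a / 2 ^ (n + 1) := by rw [pow_succ]; field_simp
    rcases key with key | key
    · obtain ⟨D, hD, h1, h2, h3⟩ := ih (a / 2) B hB hBp key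
      exact ⟨D, hD.trans (hu ▸ Set.subset_union_left), h1, h2, by rwa [e] at h3⟩
    · obtain ⟨D, hD, h1, h2, h3⟩ := ih (a / 2) C hC hCp key
      exact ⟨D, hD.trans (hu ▸ Set.subset_union_right), h1, h2, by rwa [e] at h3⟩

lemma small_upper' (hadd : SetAdd ν) (hs : SetSplit μ ν) {M η : ℝ} (hη : 0 < η)
    (hM : ∀ B, MeasurableSet B → |ν B| ≤ M) {A : Set Ω}
    (hA : MeasurableSet A) (hp : 0 < μ A) :
    ∃ D ⊆ A, MeasurableSet D ∧ 0 < μ D ∧ ∀ B ⊆ D, MeasurableSet B → ν B ≤ η := by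
  obtain ⟨n, hn⟩ := pow_unbounded_of_one_lt (M / η) (one_lt_two)
  obtain ⟨D, h1, h2, h3, h4⟩ := small_upper hadd hs n M A hA hp
    (fun B _ hm => (le_abs_self _).trans (hM B hm))
  refine ⟨D, h1, h2, h3, fun B hB hm => (h4 B hB hm).trans ?_⟩
  rw [div_le_iff₀ (by positivity)]
  rw [div_lt_iff₀ hη] at hn
  linarith

lemma small_both (hadd : SetAdd ν) (hs : SetSplit μ ν) {M η : ℝ} (hη : 0 < η)
    (hM : ∀ B, MeasurableSet B → |ν B| ≤ M) {A : Set Ω}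
    (hA : MeasurableSet A) (hp : 0 < μ A) :
    ∃ D ⊆ A, MeasurableSet D ∧ 0 < μ D ∧ SetBd ν η η D := by
  obtain ⟨D, h1, h2, h3, h4⟩ := small_upper' hadd hs hη hM hA hp
  obtain ⟨E, g1, g2, g3, g4⟩ := small_upper' hadd.neg hs.neg hη
    (fun B hB => by simpa using hM B hB) h2 h3
  exact ⟨E, g1.trans h1, g2, g3, fun B hB hm => ⟨h4 B (hB.trans g1) hm, g4 B hB hm⟩⟩

lemma bd_step (hadd : SetAdd ν) (hs : SetSplit μ ν) {M : ℝ}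
    (hM : ∀ B, MeasurableSet B → |ν B| ≤ M) (G : Set Ω → Prop)
    (hG : ∀ A B, MeasurableSet A → MeasurableSet B → Disjoint A B → G A → G B → G (A ∪ B))
    {a b : ℝ} (ha : 0 < a)
    (h : ∀ A, MeasurableSet A → 0 < μ A → SetBd ν (3 * a / 4) b A → G A) :
    ∀ A, MeasurableSet A → 0 < μ A → SetBd ν a b A → G A := by
  intro A hA hp hb
  set η := a / 10 with hη
  have hη0 : 0 < η := by positivity
  obtain ⟨D, hDA, hD, hDp, hDb⟩ := small_both hadd hs hη0 hM hA hp
  obtain ⟨D1, D2, hD1, hD2, hD1p, hD2p, hDd, hDu, -⟩ := hs D hD hDp 1 one_pos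
  have hD1D : D1 ⊆ D := hDu ▸ Set.subset_union_left
  have hD2D : D2 ⊆ D := hDu ▸ Set.subset_union_right
  -- the almost maximal set
  obtain ⟨P, hPA, hP, hPmax⟩ : ∃ P ⊆ A, MeasurableSet P ∧
      ∀ B ⊆ A, MeasurableSet B → ν B ≤ ν P + η := by
    set S : Set ℝ := {r | ∃ B ⊆ A, MeasurableSet B ∧ ν B = r}
    have hne : S.Nonempty := ⟨_, A, le_rfl, hA, rfl⟩
    have hbd : BddAbove S := ⟨a, by rintro r ⟨B, h1, h2, rfl⟩; exact (hb B h1 h2).1⟩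
    obtain ⟨r, ⟨P, h1, h2, rfl⟩, h3⟩ := exists_lt_of_lt_csSup hne (show sSup S - η < sSup S by linarith)
    refine ⟨P, h1, h2, fun B hB hm => ?_⟩
    have := le_csSup hbd (show ν B ∈ S from ⟨B, hB, hm, rfl⟩)
    linarith
  have hPin : ∀ B ⊆ P, MeasurableSet B → -η ≤ ν B := by
    intro B hB hm
    have h1 := hPmax (P \ B) (Set.sdiff_subset.trans hPA) (hP.diff hm)
    have h2 := hadd.diff hP hm hB
    linarith
  have hPout : ∀ B ⊆ A \ P, MeasurableSet B → ν B ≤ η := by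
    intro B hB hm
    have h1 := hPmax (P ∪ B) (Set.union_subset hPA (hB.trans Set.sdiff_subset)) (hP.union hm)
    have h2 := hadd P B hP hm (Set.disjoint_sdiff_right.mono_right hB)
    linarith
  set P' := (P \ D) ∪ D1 with hP'
  have hP'm : MeasurableSet P' := (hP.diff hD).union hD1
  have hP'A : P' ⊆ A := Set.union_subset (Set.sdiff_subset.trans hPA) (hD1D.trans hDA)
  have hP'p : 0 < μ P' := hD1p.trans_le (measure_mono Set.subset_union_right)
  have hN'p : 0 < μ (A \ P') := by
    refine hD2p.trans_le (measure_mono ?_)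
    intro x hx
    refine ⟨hDA (hD2D hx), ?_⟩
    rintro (h1 | h1)
    · exact h1.2 (hD2D hx)
    · exact Set.disjoint_left.1 hDd h1 hx
  have hin : ∀ B ⊆ P', MeasurableSet B → -(2 * η) ≤ ν B := by
    intro B hB hm
    have h1 := hadd.inter_diff hm hD
    have h2 := hPin (B \ D) (by
      rintro x ⟨hx, hx2⟩
      rcases hB hx with h | h
      · exact h.1
      · exact absurd (hD1D h) hx2) (hm.diff hD)
    have h3 := (hDb (B ∩ D) Set.inter_subset_right (hm.inter hD)).2
    linarith
  have hout : ∀ B ⊆ A \ P', MeasurableSet B → ν B ≤ 2 * η := by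
    intro B hB hm
    have h1 := hadd.inter_diff hm hD
    have h2 := hPout (B \ D) (by
      rintro x ⟨hx, hx2⟩
      exact ⟨(hB hx).1, fun h => (hB hx).2 (Or.inl ⟨h, hx2⟩)⟩) (hm.diff hD)
    have h3 := (hDb (B ∩ D) Set.inter_subset_right (hm.inter hD)).1
    linarith
  obtain ⟨P1, P2, hP1, hP2, hP1p, hP2p, hPd, hPu, hPe⟩ := hs P' hP'm hP'p η hη0
  have hP1P : P1 ⊆ P' := hPu ▸ Set.subset_union_left
  have hP2P : P2 ⊆ P' := hPu ▸ Set.subset_union_right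
  have hsum := hadd P1 P2 hP1 hP2 hPd
  rw [hPu] at hsum
  have hle := (hb P' hP'A hP'm).1
  rw [abs_lt] at hPe
  have piece : ∀ Q ⊆ P', MeasurableSet Q → ν Q ≤ (a + η) / 2 → SetBd ν (3 * a / 4) b Q := by
    intro Q hQ hQm hQl B hB hm
    refine ⟨?_, (hb B (hB.trans (hQ.trans hP'A)) hm).2⟩
    have h1 := hadd.diff hQm hm hB
    have h2 := hin (Q \ B) (Set.sdiff_subset.trans hQ) (hQm.diff hm)
    linarith
  have g1 := h P1 hP1 hP1p (piece P1 hP1P hP1 (by linarith))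
  have g2 := h P2 hP2 hP2p (piece P2 hP2P hP2 (by linarith))
  have g3 := h (A \ P') (hA.diff hP'm) hN'p (fun B hB hm =>
    ⟨by have := hout B hB hm; linarith, (hb B (hB.trans Set.sdiff_subset) hm).2⟩)
  have g4 := hG P1 P2 hP1 hP2 hPd g1 g2
  rw [hPu] at g4
  have g5 := hG P' (A \ P') hP'm (hA.diff hP'm) Set.disjoint_sdiff_right g4 g3
  rwa [Set.union_sdiff_cancel hP'A] at g5

lemma bd_iter (hadd : SetAdd ν) (hs : SetSplit μ ν) {M : ℝ}
    (hM : ∀ B, MeasurableSet B → |ν B| ≤ M) (G : Set Ω → Prop)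
    (hG : ∀ A B, MeasurableSet A → MeasurableSet B → Disjoint A B → G A → G B → G (A ∪ B))
    {δ b : ℝ} (hδ : 0 < δ)
    (h : ∀ A, MeasurableSet A → 0 < μ A → SetBd ν δ b A → G A) :
    ∀ A, MeasurableSet A → 0 < μ A → (∀ B ⊆ A, MeasurableSet B → -ν B ≤ b) → G A := by
  have key : ∀ n : ℕ, ∀ A, MeasurableSet A → 0 < μ A → SetBd ν ((4 / 3) ^ n * δ) b A → G A := by
    intro n
    induction n with
    | zero => simpa using h
    | succ n ih =>
      refine bd_step hadd hs hM G hG (by positivity) ?_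
      have e : 3 * ((4 / 3 : ℝ) ^ (n + 1) * δ) / 4 = (4 / 3) ^ n * δ := by rw [pow_succ]; ring
      rwa [e]
  intro A hA hp hb
  obtain ⟨n, hn⟩ := pow_unbounded_of_one_lt (M / δ) (show (1 : ℝ) < 4 / 3 by norm_num)
  rw [div_lt_iff₀ hδ] at hn
  exact key n A hA hp fun B hB hm =>
    ⟨((le_abs_self _).trans (hM B hm)).trans hn.le, hb B hB hm⟩

lemma bd_all (hadd : SetAdd ν) (hs : SetSplit μ ν) {M : ℝ}
    (hM : ∀ B, MeasurableSet B → |ν B| ≤ M) (G : Set Ω → Prop)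
    (hG : ∀ A B, MeasurableSet A → MeasurableSet B → Disjoint A B → G A → G B → G (A ∪ B))
    {δ : ℝ} (hδ : 0 < δ)
    (h : ∀ A, MeasurableSet A → 0 < μ A → SetBd ν δ δ A → G A) :
    ∀ A, MeasurableSet A → 0 < μ A → G A := by
  have h1 := bd_iter hadd hs hM G hG hδ h
  have h2 := bd_iter (b := M) hadd.neg hs.neg (fun B hB => by simpa using hM B hB) G hG hδ
    (fun A hA hp hb => h1 A hA hp (fun B hB hm => (hb B hB hm).1))
  exact fun A hA hp => h2 A hA hp (fun B _ hm => by simpa using (le_abs_self _).trans (hM B hm))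

end charges

section signs
variable {Ω : Type*} [MeasurableSpace Ω] {μ : Measure Ω}

lemma IsSign.abs_le {x : Ω → ℝ} (hx : IsSign x) (ω : Ω) : |x ω| ≤ 1 := by
  rcases hx.2 ω with h | h | h <;> simp [h]

lemma IsSign.neg {x : Ω → ℝ} (hx : IsSign x) : IsSign (-x) := by
  refine ⟨hx.1.neg, fun ω => ?_⟩
  rcases hx.2 ω with h | h | h <;> simp [h]

lemma IsSign.mem {x : Ω → ℝ} (hx : IsSign x) (X : KotheFSpace Ω μ) : X.Mem x :=
  X.solid_mem x _ hx.1 X.one_mem (fun ω => by simpa using hx.abs_le ω)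

lemma isSign_indicator {B : Set Ω} (hB : MeasurableSet B) :
    IsSign (B.indicator (fun _ => (1 : ℝ))) := by
  refine ⟨measurable_const.indicator hB, fun ω => ?_⟩
  by_cases h : ω ∈ B <;> simp [h]

lemma IsSign.integrable [IsFiniteMeasure μ] {x : Ω → ℝ} (hx : IsSign x) : Integrable x μ :=
  Integrable.of_bound hx.1.aestronglyMeasurable 1 (by
    filter_upwards with ω
    exact hx.abs_le ω)

lemma IsMeanZeroSignOn.neg {x : Ω → ℝ} {A : Set Ω} (hx : IsMeanZeroSignOn μ x A) :
    IsMeanZeroSignOn μ (-x) A := by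
  refine ⟨⟨hx.1.1.neg, ?_⟩, ?_⟩
  · rw [Function.support_neg]; exact hx.1.2
  · simp only [Pi.neg_apply, integral_neg, hx.2, neg_zero]

lemma IsMeanZeroSignOn.add [IsFiniteMeasure μ] {x y : Ω → ℝ} {A B : Set Ω}
    (hx : IsMeanZeroSignOn μ x A)
    (hy : IsMeanZeroSignOn μ y B) (hd : Disjoint A B) :
    IsMeanZeroSignOn μ (x + y) (A ∪ B) := by
  have hx0 : ∀ ω, ω ∈ A ↔ x ω ≠ 0 := fun ω => by rw [← hx.1.2]; rfl
  have hy0 : ∀ ω, ω ∈ B ↔ y ω ≠ 0 := fun ω => by rw [← hy.1.2]; rfl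
  have hor : ∀ ω, x ω = 0 ∨ y ω = 0 := by
    intro ω
    by_contra hc
    push Not at hc
    exact Set.disjoint_left.1 hd ((hx0 ω).2 hc.1) ((hy0 ω).2 hc.2)
  refine ⟨⟨⟨hx.1.1.1.add hy.1.1.1, fun ω => ?_⟩, ?_⟩, ?_⟩
  · rcases hor ω with h | h
    · simpa [h] using hy.1.1.2 ω
    · simpa [h] using hx.1.1.2 ω
  · ext ω
    rw [Set.mem_union, hx0, hy0, Function.mem_support, Pi.add_apply]
    rcases hor ω with h | h <;> simp [h]
  · have := integral_add (μ := μ) hx.1.1.integrable hy.1.1.integrable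
    simp only [Pi.add_apply]
    rw [this, hx.2, hy.2, add_zero]

/-- A sign is the difference of two indicators. -/
lemma IsSign.eq_sub {x : Ω → ℝ} (hx : IsSign x) :
    x = (x ⁻¹' {1}).indicator (fun _ => (1 : ℝ)) + -((x ⁻¹' {-1}).indicator (fun _ => (1 : ℝ))) := by
  funext ω
  rcases hx.2 ω with h | h | h <;> simp [Set.indicator, h] <;> norm_num

lemma IsMeanZeroSignOn.pos [IsFiniteMeasure μ] {x : Ω → ℝ} {A : Set Ω}
    (hx : IsMeanZeroSignOn μ x A) (hp : 0 < μ A) :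
    0 < μ (x ⁻¹' {1}) ∧ 0 < μ (x ⁻¹' {-1}) ∧ (x ⁻¹' {1}) ∪ (x ⁻¹' {-1}) = A := by
  have hm1 : MeasurableSet (x ⁻¹' {1}) := hx.1.1.1 (measurableSet_singleton _)
  have hm2 : MeasurableSet (x ⁻¹' {-1}) := hx.1.1.1 (measurableSet_singleton _)
  have hu : (x ⁻¹' {1}) ∪ (x ⁻¹' {-1}) = A := by
    rw [← hx.1.2]
    ext ω
    rcases hx.1.1.2 ω with h | h | h <;> simp [h]
  have heq : μ (x ⁻¹' {1}) = μ (x ⁻¹' {-1}) := by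
    have h := hx.2
    rw [hx.1.1.eq_sub] at h
    simp only [Pi.add_apply] at h
    rw [integral_add ((isSign_indicator hm1).integrable)
      ((isSign_indicator hm2).integrable.neg), integral_neg', integral_indicator_const _ hm1,
      integral_indicator_const _ hm2] at h
    simp only [smul_eq_mul, mul_one] at h
    have h' : μ.real (x ⁻¹' {1}) = μ.real (x ⁻¹' {-1}) := by linarith
    exact (measureReal_eq_measureReal_iff).1 h'
  have hle := measure_union_le (μ := μ) (x ⁻¹' {1}) (x ⁻¹' {-1})
  rw [hu, ← heq] at hle
  have hpos : 0 < μ (x ⁻¹' {1}) := by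
    rw [pos_iff_ne_zero]
    intro h0
    rw [h0] at hle
    simp at hle
    exact hp.ne' hle
  exact ⟨hpos, heq ▸ hpos, hu⟩

/-- The abstract step: a narrow subadditive functional and a narrow bounded additive
real functional are jointly narrow. -/
lemma joint_narrow [IsFiniteMeasure μ] (X : KotheFSpace Ω μ) (N φ : (Ω → ℝ) → ℝ)
    (hNadd : ∀ x y, X.Mem x → X.Mem y → N (x + y) ≤ N x + N y)
    (hNneg : ∀ x, X.Mem x → N (-x) = N x)
    (hφadd : ∀ x y, X.Mem x → X.Mem y → φ (x + y) = φ x + φ y)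
    (hφneg : ∀ x, X.Mem x → φ (-x) = -φ x)
    {M : ℝ} (hM : ∀ x, IsSign x → |φ x| ≤ M)
    (hN : ∀ A : Set Ω, MeasurableSet A → 0 < μ A → ∀ ε > (0 : ℝ),
      ∃ x : Ω → ℝ, IsMeanZeroSignOn μ x A ∧ N x < ε)
    (hφ : ∀ A : Set Ω, MeasurableSet A → 0 < μ A → ∀ ε > (0 : ℝ),
      ∃ x : Ω → ℝ, IsMeanZeroSignOn μ x A ∧ |φ x| < ε) :
    ∀ A : Set Ω, MeasurableSet A → 0 < μ A → ∀ ε > (0 : ℝ),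
      ∃ x : Ω → ℝ, IsMeanZeroSignOn μ x A ∧ N x + |φ x| < ε := by
  intro A hA hp ε hε
  set ν : Set Ω → ℝ := fun B => φ (B.indicator (fun _ => (1 : ℝ))) with hν
  have hsub : ∀ x, IsSign x → φ x = ν (x ⁻¹' {1}) - ν (x ⁻¹' {-1}) := by
    intro x hx
    have h1 := (isSign_indicator (hx.1 (measurableSet_singleton (1 : ℝ))))
    have h2 := (isSign_indicator (hx.1 (measurableSet_singleton (-1 : ℝ))))
    conv_lhs => rw [hx.eq_sub]
    rw [hφadd _ _ (h1.mem X) (h2.neg.mem X), hφneg _ (h2.mem X)]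
    ring
  have hadd : SetAdd ν := by
    intro B C hB hC hd
    simp only [hν]
    rw [← hφadd _ _ ((isSign_indicator hB).mem X) ((isSign_indicator hC).mem X),
      Set.indicator_union_of_disjoint hd]
    rfl
  have hsp : SetSplit μ ν := by
    intro B hB hBp η hη
    obtain ⟨x, hx, hxe⟩ := hφ B hB hBp η hη
    obtain ⟨h1, h2, h3⟩ := hx.pos hBp
    refine ⟨_, _, hx.1.1.1 (measurableSet_singleton _), hx.1.1.1 (measurableSet_singleton _),
      h1, h2, ?_, h3, ?_⟩
    · refine Disjoint.preimage _ ?_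
      rw [Set.disjoint_singleton]; norm_num
    · rwa [← hsub x hx.1.1]
  have main := bd_all (μ := μ) hadd hsp (fun B hB => hM _ (isSign_indicator hB))
    (fun A => ∀ η > (0 : ℝ), ∃ x, IsMeanZeroSignOn μ x A ∧ N x < η ∧ |φ x| ≤ ε / 2)
    (by
      intro B C hB hC hd h1 h2 η hη
      obtain ⟨x, hx, hxN, hxφ⟩ := h1 (η / 2) (by positivity)
      obtain ⟨y, hy, hyN, hyφ⟩ := h2 (η / 2) (by positivity)
      have mx := hx.1.1.mem X
      have my := hy.1.1.mem X
      have my' := hy.neg.1.1.mem X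
      rw [abs_le] at hxφ hyφ
      by_cases hs : (0 ≤ φ x ∧ φ y ≤ 0) ∨ (φ x ≤ 0 ∧ 0 ≤ φ y)
      · refine ⟨x + y, hx.add hy hd, by linarith [hNadd x y mx my], ?_⟩
        rw [hφadd x y mx my, abs_le]
        rcases hs with hs | hs <;> constructor <;> linarith [hs.1, hs.2]
      · refine ⟨x + -y, hx.add hy.neg hd, by linarith [hNadd x (-y) mx my', hNneg y my], ?_⟩
        rw [hφadd x (-y) mx my', hφneg y my, abs_le]
        rcases le_total 0 (φ x) with h | h <;> rcases le_total 0 (φ y) with h' | h'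
        · constructor <;> linarith
        · exact absurd (Or.inl ⟨h, h'⟩) hs
        · exact absurd (Or.inr ⟨h, h'⟩) hs
        · constructor <;> linarith)
    (δ := ε / 4) (by positivity)
    (by
      intro B hB hBp hbd η hη
      obtain ⟨x, hx, hxN⟩ := hN B hB hBp η hη
      obtain ⟨-, -, h3⟩ := hx.pos hBp
      refine ⟨x, hx, hxN, ?_⟩
      have a1 := hbd (x ⁻¹' {1}) (h3 ▸ Set.subset_union_left)
        (hx.1.1.1 (measurableSet_singleton _))
      have a2 := hbd (x ⁻¹' {-1}) (h3 ▸ Set.subset_union_right)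
        (hx.1.1.1 (measurableSet_singleton _))
      rw [hsub x hx.1.1, abs_le]
      constructor <;> linarith [a1.1, a1.2, a2.1, a2.2])
  obtain ⟨x, hx, h1, h2⟩ := main A hA hp (ε / 2) (by positivity)
  exact ⟨x, hx, by linarith⟩

/-- Iterating over finitely many functionals. -/
lemma joint_narrow_finset [IsFiniteMeasure μ] (X : KotheFSpace Ω μ) (N : (Ω → ℝ) → ℝ)
    {ι : Type*} (s : Finset ι) (φ : ι → (Ω → ℝ) → ℝ)
    (hNadd : ∀ x y, X.Mem x → X.Mem y → N (x + y) ≤ N x + N y)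
    (hNneg : ∀ x, X.Mem x → N (-x) = N x)
    (hφadd : ∀ i, ∀ x y, X.Mem x → X.Mem y → φ i (x + y) = φ i x + φ i y)
    (hφneg : ∀ i, ∀ x, X.Mem x → φ i (-x) = -φ i x)
    (hM : ∀ i, ∃ M, ∀ x, IsSign x → |φ i x| ≤ M)
    (hN : ∀ A : Set Ω, MeasurableSet A → 0 < μ A → ∀ ε > (0 : ℝ),
      ∃ x : Ω → ℝ, IsMeanZeroSignOn μ x A ∧ N x < ε)
    (hφ : ∀ i, ∀ A : Set Ω, MeasurableSet A → 0 < μ A → ∀ ε > (0 : ℝ),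
      ∃ x : Ω → ℝ, IsMeanZeroSignOn μ x A ∧ |φ i x| < ε) :
    ∀ A : Set Ω, MeasurableSet A → 0 < μ A → ∀ ε > (0 : ℝ),
      ∃ x : Ω → ℝ, IsMeanZeroSignOn μ x A ∧ N x + ∑ i ∈ s, |φ i x| < ε := by
  classical
  induction s using Finset.induction_on with
  | empty => simpa using hN
  | insert i s hi ih =>
    obtain ⟨M, hMi⟩ := hM i
    intro A hA hp ε hε
    obtain ⟨x, hx, hxe⟩ := joint_narrow X (fun x => N x + ∑ i ∈ s, |φ i x|) (φ i)
      (fun x y mx my => by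
        have h1 := hNadd x y mx my
        have h2 : ∑ i ∈ s, |φ i (x + y)| ≤ ∑ i ∈ s, |φ i x| + ∑ i ∈ s, |φ i y| := by
          rw [← Finset.sum_add_distrib]
          refine Finset.sum_le_sum fun j _ => ?_
          rw [hφadd j x y mx my]
          exact abs_add_le _ _
        linarith)
      (fun x mx => by
        simp only [hNneg x mx]
        congr 1
        exact Finset.sum_congr rfl fun j _ => by rw [hφneg j x mx, abs_neg])
      (hφadd i) (hφneg i) hMi ih (hφ i) A hA hp ε hε
    refine ⟨x, hx, ?_⟩
    rw [Finset.sum_insert hi]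
    linarith

end signs

section hb
variable {Y : Type*} [AddCommGroup Y] [Module ℝ Y]

lemma FSpaceNorm.norm_nsmul_le (FY : FSpaceNorm Y) (k : ℕ) (y : Y) :
    FY.norm ((k : ℝ) • y) ≤ k * FY.norm y := by
  induction k with
  | zero => simp [(FY.eq_zero_iff 0).2 rfl]
  | succ k ih =>
    push_cast
    rw [add_smul, one_smul, add_mul, one_mul]
    exact (FY.add_le _ _).trans (by linarith)

/-- Supporting functional for a sublinear gauge. -/
lemma exists_support_functional (p : Y → ℝ) (p0 : ∀ y, 0 ≤ p y)
    (phom : ∀ c : ℝ, 0 < c → ∀ y, p (c • y) = c * p y)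
    (padd : ∀ y z, p (y + z) ≤ p y + p z) (c : Y) :
    ∃ f : Y →ₗ[ℝ] ℝ, (∀ y, f y ≤ p y) ∧ (f c = p c ∨ c = 0) := by
  by_cases hc : c = 0
  · exact ⟨0, fun y => by simpa using p0 y, Or.inr hc⟩
  obtain ⟨g, hg1, hg2⟩ := exists_extension_of_le_sublinear
    (LinearPMap.mkSpanSingleton (K := ℝ) c (p c) hc) p phom padd (by
      rintro ⟨y, hy⟩
      obtain ⟨t, rfl⟩ := Submodule.mem_span_singleton.1 hy
      rw [show _ = _ from LinearPMap.mkSpanSingleton'_apply c (p c) _ t hy]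
      simp only [smul_eq_mul, RingHom.id_apply]
      rcases lt_or_ge 0 t with ht | ht
      · rw [phom t ht]
      · exact (mul_nonpos_of_nonpos_of_nonneg ht (p0 c)).trans (p0 _))
  refine ⟨g, hg2, Or.inl ?_⟩
  have := hg1 ⟨c, Submodule.mem_span_singleton_self c⟩
  exact this.trans (LinearPMap.mkSpanSingleton_apply ℝ ℝ hc (p c))

end hb

/-- Theorem 5.4: `Y` a locally convex F-space, `T₁` narrow, `T₂` narrow with `T₂(Z)`
relatively compact; then `T₁ + T₂` is narrow. -/
theorem stmt_9 {Ω : Type*} [MeasurableSpace Ω] (μ : Measure Ω)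
    [IsFiniteMeasure μ] (hμ : Atomless μ)
    (X : KotheFSpace Ω μ) (Y : Type*) [AddCommGroup Y] [Module ℝ Y]
    (FY : FSpaceNorm Y)
    (hlc : ∀ ε > (0 : ℝ), ∃ C : Set Y, Convex ℝ C ∧
      (∃ δ > (0 : ℝ), ∀ y : Y, FY.norm y ≤ δ → y ∈ C) ∧
      ∀ y ∈ C, FY.norm y ≤ ε)
    (T₁ T₂ : KOperator X Y FY)
    (h₁ : T₁.Narrow) (h₂ : T₂.Narrow) (h₂cpt : T₂.RelCompactSigns) :
    ∀ A : Set Ω, MeasurableSet A → 0 < μ A → ∀ ε > (0 : ℝ),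
      ∃ x : Ω → ℝ, IsMeanZeroSignOn μ x A ∧
        FY.norm (T₁.toFun x + T₂.toFun x) < ε := by
  intro A hA hp ε hε
  obtain ⟨C, hC, ⟨δ, hδ, hδC⟩, hCε⟩ := hlc (ε / 4) (by positivity)
  have h0C : (0 : Y) ∈ C := hδC 0 (by rw [(FY.eq_zero_iff 0).2 rfl]; exact hδ.le)
  have habs : Absorbent ℝ C := by
    intro y
    obtain ⟨r, hr, hr2⟩ := FY.smul_cont y δ hδ
    rw [absorbs_iff_eventually_nhds_zero (by simpa using h0C)]
    rw [Metric.eventually_nhds_iff]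
    refine ⟨r, hr, fun a ha => ?_⟩
    rw [Set.mapsTo_singleton]
    refine hδC _ (hr2 a ?_)
    rw [Real.dist_eq, sub_zero] at ha
    exact ha.le
  set p : Y → ℝ := gauge C with hpdef
  have p0 : ∀ y, 0 ≤ p y := fun y => gauge_nonneg y
  have phom : ∀ c : ℝ, 0 < c → ∀ y, p (c • y) = c * p y := fun c hc y => by
    rw [hpdef, gauge_smul_of_nonneg hc.le, smul_eq_mul]
  have padd : ∀ y z, p (y + z) ≤ p y + p z := fun y z => gauge_add_le hC habs y z
  have psmall : ∀ (k : ℕ) y, 0 < k → FY.norm y ≤ δ / k → p y ≤ 1 / k := by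
    intro k y hk hy
    have hk' : (0 : ℝ) < k := by exact_mod_cast hk
    have h1 : FY.norm ((k : ℝ) • y) ≤ δ := by
      refine (FY.norm_nsmul_le k y).trans ?_
      rw [le_div_iff₀ hk'] at hy
      linarith
    have h2 : p ((k : ℝ) • y) ≤ 1 := gauge_le_one_of_mem (hδC _ h1)
    rw [phom _ hk'] at h2
    rw [le_div_iff₀ hk']
    linarith
  have plt : ∀ y, p y < 1 → y ∈ C := fun y hy => by
    have h1 := setOfPred_gauge_lt_one_subset_self hC h0C habs
    exact h1 hy
  obtain ⟨n, c, hc⟩ := h₂cpt (δ / (4 : ℕ)) (by positivity)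
  choose f hf1 hf2 using exists_support_functional p p0 phom padd
  have pc : ∀ x, IsSign x → ∃ i, p (T₂.toFun x - c i) ≤ 1 / 4 ∧ p (c i - T₂.toFun x) ≤ 1 / 4 := by
    intro x hx
    obtain ⟨i, hi⟩ := hc x hx
    refine ⟨i, by simpa using psmall 4 _ (by norm_num) hi, ?_⟩
    rw [← FY.neg, neg_sub] at hi
    simpa using psmall 4 _ (by norm_num) hi
  have T₂neg : ∀ x, X.Mem x → T₂.toFun (-x) = -T₂.toFun x := fun x hx => by
    have := T₂.map_smul (-1) x hx
    simpa using this
  have T₁neg : ∀ x, X.Mem x → T₁.toFun (-x) = -T₁.toFun x := fun x hx => by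
    have := T₁.map_smul (-1) x hx
    simpa using this
  have fabs : ∀ z y r, p y ≤ r → p (-y) ≤ r → |f z y| ≤ r := by
    intro z y r h1 h2
    rw [abs_le]
    have h3 := hf1 z (-y)
    rw [map_neg] at h3
    constructor <;> linarith [hf1 z y]
  obtain ⟨x, hx, hxe⟩ := joint_narrow_finset X (fun x => FY.norm (T₁.toFun x)) Finset.univ
    (fun (i : Fin n) x => f (c i) (T₂.toFun x))
    (fun x y mx my => by simp only [T₁.map_add x y mx my]; exact FY.add_le _ _)
    (fun x mx => by simp only [T₁neg x mx]; exact FY.neg _)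
    (fun i x y mx my => by simp only [T₂.map_add x y mx my, map_add])
    (fun i x mx => by simp only [T₂neg x mx, map_neg])
    (fun i => by
      refine ⟨∑ j, |f (c i) (c j)| + 1 / 4, fun x hx => ?_⟩
      obtain ⟨j, hj1, hj2⟩ := pc x hx
      have h1 := fabs (c i) (T₂.toFun x - c j) (1 / 4) hj1 (by rwa [neg_sub])
      have h2 : |f (c i) (c j)| ≤ ∑ j, |f (c i) (c j)| :=
        Finset.single_le_sum (f := fun j => |f (c i) (c j)|) (fun _ _ => abs_nonneg _)
          (Finset.mem_univ j)
      have h3 : f (c i) (T₂.toFun x) = f (c i) (c j) + f (c i) (T₂.toFun x - c j) := by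
        rw [← map_add]; congr 1; abel
      rw [h3]
      exact (abs_add_le _ _).trans (add_le_add h2 h1))
    h₁
    (fun i B hB hBp η hη => by
      obtain ⟨k, hk⟩ := exists_nat_one_div_lt hη
      obtain ⟨x, hx, hxe⟩ := h₂ B hB hBp (δ / ((k + 1 : ℕ) : ℝ)) (by positivity)
      refine ⟨x, hx, lt_of_le_of_lt ?_ hk⟩
      have h1 := psmall (k + 1) _ k.succ_pos hxe.le
      have h2 := psmall (k + 1) (-T₂.toFun x) k.succ_pos (by rw [FY.neg]; exact hxe.le)
      push_cast at h1 h2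
      exact fabs _ _ _ h1 h2)
    A hA hp (min (ε / 4) (1 / 4)) (by positivity)
  refine ⟨x, hx, ?_⟩
  have hsum : ∀ i, |f (c i) (T₂.toFun x)| ≤ ∑ j, |f (c j) (T₂.toFun x)| := fun i =>
    Finset.single_le_sum (f := fun j => |f (c j) (T₂.toFun x)|) (fun _ _ => abs_nonneg _)
      (Finset.mem_univ i)
  have hnn : 0 ≤ ∑ j, |f (c j) (T₂.toFun x)| := Finset.sum_nonneg fun _ _ => abs_nonneg _
  have hN0 := FY.nonneg (T₁.toFun x)
  have m1 := min_le_left (ε / 4) (1 / 4 : ℝ)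
  have m2 := min_le_right (ε / 4) (1 / 4 : ℝ)
  obtain ⟨i, hi1, hi2⟩ := pc x hx.1.1
  have hci : p (c i) ≤ 1 / 2 := by
    rcases hf2 (c i) with h | h
    · have e : f (c i) (c i) = f (c i) (T₂.toFun x) + f (c i) (c i - T₂.toFun x) := by
        rw [← map_add]; congr 1; abel
      have h4 := hf1 (c i) (c i - T₂.toFun x)
      have h5 := le_abs_self (f (c i) (T₂.toFun x))
      linarith [hsum i]
    · rw [h]
      have : p 0 = 0 := gauge_zero
      rw [this]; norm_num
  have hpT : p (T₂.toFun x) < 1 := by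
    have h1 := padd (c i) (T₂.toFun x - c i)
    rw [add_sub_cancel] at h1
    linarith
  have h2 := hCε _ (plt _ hpT)
  have h3 := FY.add_le (T₁.toFun x) (T₂.toFun x)
  linarith
end
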